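/- In the heat kernel setup, fix an integer b ≥ 2, α ∈ (−2,1) and β < 0 with α+β ∈ (−2,1). With the paraproduct Π_g^{(b)}(f) defined as in the setup (its frequency pieces Q_s^{(b−1)} Π_g^{(b)}(f) and e^{−L} Π_g^{(b)}(f) being given by absolutely convergent dt/t-integrals), there is a constant C such that for all f, g ∈ L^∞(μ) with ‖f‖_{C^α,(b−1)} < ∞ and ‖g‖_{C^β,(b−1)} < ∞: ‖e^{−L} Π_g^{(b)}(f)‖_∞ + sup_{0<s≤1} s^{−(α+β)/2} ‖Q_s^{(b−1)} Π_g^{(b)}(f)‖_∞ ≤ C·‖g‖_{C^β,(b−1)}·‖f‖_{C^α,(b−1)}, i.e. ‖Π_g^{(b)}(f)‖_{C^{α+β}} ≲ ‖g‖_{C^β}‖f‖_{C^α}. (Proposition 3.2, second estimate.) -/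

import Mathlib

open MeasureTheory Metric Set
open scoped ENNReal NNReal

noncomputable section

/-- The (pointwise) supremum norm of a real-valued function, valued in `ℝ≥0∞`. -/
def supNorm {M : Type*} (g : M → ℝ) : ℝ≥0∞ := ⨆ x, (‖g x‖₊ : ℝ≥0∞)

/-- `γ_a = ∫_0^∞ s^a e^{-s} ds/s`. -/
def gammaInt (a : ℕ) : ℝ := ∫ s in Set.Ioi (0 : ℝ), s ^ a * Real.exp (-s) / s

/-- A conservative heat kernel on a doubling metric measure space, satisfying the
Gaussian upper estimates (UE) for all time derivatives, for `0 < t ≤ 1`. -/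
structure HeatKernelSetup (M : Type*) [MeasurableSpace M] [MetricSpace M] where
  μ : Measure M
  p : ℝ → M → M → ℝ
  C_D : ℝ
  C_D_pos : 0 < C_D
  doubling : ∀ (x : M) (r : ℝ), 0 < r →
    μ (Metric.ball x (2 * r)) ≤ ENNReal.ofReal C_D * μ (Metric.ball x r)
  p_nonneg : ∀ t : ℝ, 0 < t → ∀ x y, 0 ≤ p t x y
  p_symm : ∀ t : ℝ, 0 < t → ∀ x y, p t x y = p t y x
  p_meas : ∀ t : ℝ, 0 < t → Measurable (Function.uncurry (p t))
  semigroup : ∀ s t : ℝ, 0 < s → 0 < t → ∀ x z,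
    p (s + t) x z = ∫ y, p s x y * p t y z ∂μ
  conservative : ∀ t : ℝ, 0 < t → ∀ x, ∫ y, p t x y ∂μ = 1
  smooth : ∀ (x y : M) (m : ℕ) (t : ℝ), 0 < t →
    DifferentiableAt ℝ (iteratedDeriv m (fun s => p s x y)) t
  diff_under_int : ∀ (f : M → ℝ), Measurable f → supNorm f < ⊤ →
    ∀ (m : ℕ) (x : M) (t : ℝ), 0 < t →
      iteratedDeriv m (fun s => ∫ y, p s x y * f y ∂μ) t
        = ∫ y, iteratedDeriv m (fun s => p s x y) t * f y ∂μ
  UE : ∀ m : ℕ, ∃ C, 0 < C ∧ ∃ c, 0 < c ∧ ∀ t : ℝ, 0 < t → t ≤ 1 → ∀ x y,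
    |t ^ m * iteratedDeriv m (fun s => p s x y) t|
      ≤ C / Real.sqrt ((μ (Metric.ball x (Real.sqrt t))).toReal
            * (μ (Metric.ball y (Real.sqrt t))).toReal)
          * Real.exp (-c * dist x y ^ 2 / t)

namespace HeatKernelSetup

variable {M : Type*} [MeasurableSpace M] [MetricSpace M] (H : HeatKernelSetup M)

/-- The semigroup `e^{-tL}` applied to `f`. -/
def S (t : ℝ) (f : M → ℝ) (x : M) : ℝ := ∫ y, H.p t x y * f y ∂H.μ

/-- `Q_t^{(a)} f = (-1)^a t^a ∂_t^a (e^{-tL} f)`. -/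
def Q (a : ℕ) (t : ℝ) (f : M → ℝ) (x : M) : ℝ :=
  (-1 : ℝ) ^ a * t ^ a * iteratedDeriv a (fun s => H.S s f x) t

/-- `P_t^{(a)} f = ∑_{k<a} c_{a,k} (-1)^k t^k ∂_t^k (e^{-tL} f)`, where the coefficients
`c_{a,k} = 1/k!` are determined by `φ_a(x) = (∑_k c_{a,k} x^k) e^{-x}`. -/
def P (a : ℕ) (t : ℝ) (f : M → ℝ) (x : M) : ℝ :=
  ∑ k ∈ Finset.range a, ((Nat.factorial k : ℝ))⁻¹ * (-1 : ℝ) ^ k * t ^ k *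
    iteratedDeriv k (fun s => H.S s f x) t

/-- `(tL)P_t^{(a)} f = ∑_{k<a} c_{a,k} (-1)^{k+1} t^{k+1} ∂_t^{k+1} (e^{-tL} f)`. -/
def LP (a : ℕ) (t : ℝ) (f : M → ℝ) (x : M) : ℝ :=
  ∑ k ∈ Finset.range a, ((Nat.factorial k : ℝ))⁻¹ * (-1 : ℝ) ^ (k + 1) * t ^ (k + 1) *
    iteratedDeriv (k + 1) (fun s => H.S s f x) t

/-- The Hölder norm `‖f‖_{C^σ,(a)} = ‖e^{-L} f‖_∞ + sup_{0<t≤1} t^{-σ/2} ‖Q_t^{(a)} f‖_∞`. -/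
def CNorm (a : ℕ) (σ : ℝ) (f : M → ℝ) : ℝ≥0∞ :=
  supNorm (H.S 1 f) +
    ⨆ t ∈ Set.Ioc (0 : ℝ) 1, ENNReal.ofReal (t ^ (-σ / 2)) * supNorm (H.Q a t f)

/-- The integrand of the paraproduct `Π_g^{(b)}(f)` at frequency scale `t`:
`(tL)P_t^{(b)}( Q_t^{(b-1)} f · P_t^{(b)} g ) + Q_t^{(b-1)}( (tL)P_t^{(b)} f · P_t^{(b)} g )`. -/
def paraInner (b : ℕ) (g f : M → ℝ) (t : ℝ) : M → ℝ := fun y =>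
  H.LP b t (fun z => H.Q (b - 1) t f z * H.P b t g z) y
    + H.Q (b - 1) t (fun z => H.LP b t f z * H.P b t g z) y

/-- `Q_s^{(a)} Π_g^{(b)}(f)`, defined by applying `Q_s^{(a)}` under the time integral. -/
def paraQ (b a : ℕ) (g f : M → ℝ) (s : ℝ) : M → ℝ := fun x =>
  (gammaInt b)⁻¹ * ∫ t in Set.Ioc (0 : ℝ) 1, H.Q a s (H.paraInner b g f t) x / t

/-- `e^{-L} Π_g^{(b)}(f)`, defined by applying `e^{-L}` under the time integral. -/
def paraS (b : ℕ) (g f : M → ℝ) : M → ℝ := fun x =>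
  (gammaInt b)⁻¹ * ∫ t in Set.Ioc (0 : ℝ) 1, H.S 1 (H.paraInner b g f t) x / t

/-- The paraproduct `Π_g^{(b)}(f)` as a function, when the integral converges. -/
def paraFn (b : ℕ) (g f : M → ℝ) : M → ℝ := fun x =>
  (gammaInt b)⁻¹ * ∫ t in Set.Ioc (0 : ℝ) 1, H.paraInner b g f t x / t

/-- The resolution operator `R(v)_t = ∫_0^t P_{t-s}^{(b)} v(s) ds`. -/
def resolve (b : ℕ) (v : ℝ → M → ℝ) (t : ℝ) : M → ℝ := fun x =>
  ∫ s in Set.Ioc (0 : ℝ) t, H.P b (t - s) (v s) x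

end HeatKernelSetup

/-!
Gaussian upper bounds and doubling control the time derivatives of the heat kernel in `L¹`, so every
`u(tL)e^{-tL}` with `u` a polynomial is bounded on `L^∞`. A Hölder norm of regularity `σ` defined
through one derivative order controls every order `k > σ / 2`: higher orders follow by smoothing,
lower ones by integrating the next derivative in time. Hence, at time `t`, the inner products of the
paraproduct are `O(t^{(α + β) / 2})`, because the `f`-factor carries at least one power of `tL` and
`β < 0` makes order zero admissible for `g`. If `u(0) = 0`, the composition of `Q_s` with
`u(tL)e^{-tL}` gains the almost orthogonality factor `st / (s + t)²`, and integrating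
`st / (s + t)² · t^{(α + β) / 2}` against `dt / t` gives a multiple of `s^{(α + β) / 2}`.
-/

/-! ### Gaussian integrals on doubling spaces -/

section Doubling

variable {M : Type*} [MeasurableSpace M] [PseudoMetricSpace M] {μ : Measure M} {A : ℝ≥0}

/-- Volume doubling with constant `A`, for open balls of every radius. -/
def IsDoublingWith (μ : Measure M) (A : ℝ≥0) : Prop :=
  ∀ (x : M) (r : ℝ), 0 < r → μ (ball x (2 * r)) ≤ A * μ (ball x r)

lemma exists_lt_two_pow_mul {r : ℝ} (hr : 0 < r) (d : ℝ) : ∃ n : ℕ, d < 2 ^ n * r := by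
  obtain ⟨n, hn⟩ := pow_unbounded_of_one_lt (d / r) one_lt_two
  exact ⟨n, (div_lt_iff₀ hr).1 hn⟩

namespace IsDoublingWith

lemma measure_ball_two_pow_mul_le (h : IsDoublingWith μ A) (x : M) {r : ℝ} (hr : 0 < r) (n : ℕ) :
    μ (ball x (2 ^ n * r)) ≤ A ^ n * μ (ball x r) := by
  induction n with
  | zero => simp
  | succ n ih =>
    calc μ (ball x (2 ^ (n + 1) * r)) = μ (ball x (2 * (2 ^ n * r))) := by congr 2; ring
      _ ≤ A * μ (ball x (2 ^ n * r)) := h x _ (by positivity)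
      _ ≤ A * (A ^ n * μ (ball x r)) := by gcongr
      _ = A ^ (n + 1) * μ (ball x r) := by ring

lemma measure_ball_pos [NeZero μ] (h : IsDoublingWith μ A) (x : M) {r : ℝ} (hr : 0 < r) :
    0 < μ (ball x r) := by
  refine pos_iff_ne_zero.2 fun h0 => NeZero.ne μ (Measure.measure_univ_eq_zero.1 ?_)
  have hnull (n : ℕ) : μ (ball x (2 ^ n * r)) = 0 := by
    simpa [h0] using h.measure_ball_two_pow_mul_le x hr n
  refine measure_mono_null (fun y _ => mem_iUnion.2 ?_) (measure_iUnion_null hnull)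
  exact exists_lt_two_pow_mul hr (dist y x)

lemma measure_ball_ne_top (h : IsDoublingWith μ A) {x : M} {r : ℝ} (hr : 0 < r)
    (hx : μ (ball x r) ≠ ⊤) (y : M) (ρ : ℝ) : μ (ball y ρ) ≠ ⊤ := by
  obtain ⟨n, hn⟩ := exists_lt_two_pow_mul hr (ρ + dist y x)
  refine ne_top_of_le_ne_top ?_ <|
    (measure_mono (ball_subset_ball' hn.le)).trans (h.measure_ball_two_pow_mul_le x hr n)
  exact ENNReal.mul_ne_top (ENNReal.pow_ne_top ENNReal.coe_ne_top) hx

lemma measureReal_ball_pos [NeZero μ] (h : IsDoublingWith μ A)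
    (hfin : ∀ x r, μ (ball x r) ≠ ⊤) (x : M) {r : ℝ} (hr : 0 < r) : 0 < μ.real (ball x r) :=
  ENNReal.toReal_pos (h.measure_ball_pos x hr).ne' (hfin x r)

lemma measureReal_ball_two_pow_mul_le (h : IsDoublingWith μ A) (hfin : ∀ x r, μ (ball x r) ≠ ⊤)
    (x : M) {r : ℝ} (hr : 0 < r) (n : ℕ) :
    μ.real (ball x (2 ^ n * r)) ≤ A ^ n * μ.real (ball x r) := by
  have hle := ENNReal.toReal_mono
    (ENNReal.mul_ne_top (ENNReal.pow_ne_top ENNReal.coe_ne_top) (hfin x r))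
    (h.measure_ball_two_pow_mul_le x hr n)
  simpa [Measure.real] using hle

lemma one_le [NeZero μ] [Nonempty M] (h : IsDoublingWith μ A) (hfin : ∀ x r, μ (ball x r) ≠ ⊤) :
    1 ≤ A := by
  inhabit M
  have hpos := h.measureReal_ball_pos hfin (default : M) one_pos
  have hle : μ.real (ball (default : M) 1) ≤ A * μ.real (ball default 1) := by
    simpa using (measureReal_mono (ball_subset_ball (by norm_num : (1 : ℝ) ≤ 2 ^ 1 * 1))
      (hfin _ _)).trans (h.measureReal_ball_two_pow_mul_le hfin (default : M) one_pos 1)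
  exact_mod_cast (le_mul_iff_one_le_left hpos).1 hle

lemma inv_sqrt_measureReal_ball_mul_le [NeZero μ] (h : IsDoublingWith μ A)
    (hfin : ∀ x r, μ (ball x r) ≠ ⊤) {x y : M} {r : ℝ} (hr : 0 < r) {k : ℕ}
    (hxy : dist x y < 2 ^ k * r) :
    (√(μ.real (ball x r) * μ.real (ball y r)))⁻¹ ≤ A ^ (k + 1) / μ.real (ball x r) := by
  have : Nonempty M := ⟨x⟩
  have hVx := h.measureReal_ball_pos hfin x hr
  have hVy := h.measureReal_ball_pos hfin y hr
  have hA : (1 : ℝ) ≤ A ^ (k + 1) := one_le_pow₀ (mod_cast h.one_le hfin)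
  have hsub : ball x r ⊆ ball y (2 ^ (k + 1) * r) := by
    refine ball_subset_ball' ?_
    have : (1 : ℝ) ≤ 2 ^ k := one_le_pow₀ one_le_two
    rw [pow_succ]
    nlinarith
  have hcomp : μ.real (ball x r) ≤ A ^ (k + 1) * μ.real (ball y r) :=
    (measureReal_mono hsub (hfin _ _)).trans (h.measureReal_ball_two_pow_mul_le hfin y hr _)
  rw [← inv_div]
  refine inv_anti₀ (by positivity) (Real.le_sqrt_of_sq_le ?_)
  rw [div_pow, div_le_iff₀ (by positivity)]
  calc μ.real (ball x r) ^ 2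
      ≤ μ.real (ball x r) * (A ^ (k + 1) * μ.real (ball y r)) := by rw [sq]; gcongr
    _ ≤ A ^ (k + 1) * (μ.real (ball x r) * (A ^ (k + 1) * μ.real (ball y r))) :=
        le_mul_of_one_le_left (by positivity) hA
    _ = μ.real (ball x r) * μ.real (ball y r) * (A ^ (k + 1)) ^ 2 := by ring

end IsDoublingWith

lemma exists_dyadic_shell {d r : ℝ} (hr : 0 < r) :
    ∃ k : ℕ, d < 2 ^ k * r ∧ (4 ^ k - 1) * r ^ 2 ≤ 4 * d ^ 2 := by
  classical
  have hex := exists_lt_two_pow_mul hr d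
  refine ⟨Nat.find hex, Nat.find_spec hex, ?_⟩
  rcases hk : Nat.find hex with _ | k
  · simpa using by positivity
  · have hle : 2 ^ k * r ≤ d := not_lt.1 (Nat.find_min hex (by omega))
    have hsq : (2 ^ k * r) ^ 2 ≤ d ^ 2 := by gcongr
    have h4 : (4 : ℝ) ^ (k + 1) = 4 * (2 ^ k) ^ 2 := by
      rw [← pow_mul, mul_comm k, pow_mul]; norm_num; ring
    rw [h4]
    nlinarith

lemma summable_pow_mul_exp_neg_four_pow {A c : ℝ} (hA : 0 < A) (hc : 0 < c) :
    Summable fun k : ℕ => A ^ (2 * k + 1) * Real.exp (-(c / 4) * (4 ^ k - 1)) := by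
  refine summable_of_ratio_test_tendsto_lt_one (l := 0) one_pos
    (.of_forall fun k => by positivity) ?_
  have hlim : Filter.Tendsto (fun k : ℕ => A ^ 2 * Real.exp (-(3 * c / 4) * 4 ^ k))
      Filter.atTop (nhds (A ^ 2 * 0)) := by
    refine (Real.tendsto_exp_atBot.comp ?_).const_mul _
    exact (tendsto_pow_atTop_atTop_of_one_lt (by norm_num)).const_mul_atTop_of_neg (by linarith)
  rw [mul_zero] at hlim
  refine hlim.congr fun k => ?_
  rw [Real.norm_of_nonneg (by positivity), Real.norm_of_nonneg (by positivity), mul_div_mul_comm,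
    ← Real.exp_sub]
  congr 1
  · rw [eq_div_iff (by positivity)]; ring
  · congr 1; ring

variable [NeZero μ]

lemma IsDoublingWith.gaussian_le_of_shell (h : IsDoublingWith μ A)
    (hfin : ∀ x r, μ (ball x r) ≠ ⊤) {c : ℝ} (hc : 0 ≤ c) {x y : M} {r : ℝ} (hr : 0 < r) {k : ℕ}
    (hlt : dist x y < 2 ^ k * r) (hle : (4 ^ k - 1) * r ^ 2 ≤ 4 * dist x y ^ 2) :
    (√(μ.real (ball x r) * μ.real (ball y r)))⁻¹ * Real.exp (-c * dist x y ^ 2 / r ^ 2)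
      ≤ A ^ (k + 1) * Real.exp (-(c / 4) * (4 ^ k - 1)) / μ.real (ball x r) := by
  have hexp : Real.exp (-c * dist x y ^ 2 / r ^ 2) ≤ Real.exp (-(c / 4) * (4 ^ k - 1)) := by
    rw [Real.exp_le_exp, div_le_iff₀ (by positivity)]
    nlinarith [mul_le_mul_of_nonneg_left hle hc]
  rw [mul_div_right_comm (_ ^ (k + 1))]
  exact mul_le_mul (h.inv_sqrt_measureReal_ball_mul_le hfin hr hlt) hexp (Real.exp_nonneg _)
    (by positivity)

-- On the `k`-th dyadic shell the Gaussian is at most `exp (-(c/4)(4 ^ k - 1))`, and doubling costs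
-- only `A ^ k`. Balls need not be measurable, hence `toMeasurable`.
lemma IsDoublingWith.exists_measurable_gaussian_le (h : IsDoublingWith μ A)
    (hfin : ∀ x r, μ (ball x r) ≠ ⊤) {c : ℝ} (hc : 0 < c) :
    ∃ K : ℝ≥0, ∀ (x : M) (r : ℝ), 0 < r → ∃ Φ : M → ℝ≥0∞, Measurable Φ ∧ ∫⁻ y, Φ y ∂μ ≤ K ∧
      ∀ y, ENNReal.ofReal ((√(μ.real (ball x r) * μ.real (ball y r)))⁻¹ *
        Real.exp (-c * dist x y ^ 2 / r ^ 2)) ≤ Φ y := by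
  rcases isEmpty_or_nonempty M with _ | _
  · exact ⟨0, fun x => isEmptyElim x⟩
  set E : ℕ → ℝ := fun k => Real.exp (-(c / 4) * (4 ^ k - 1))
  have hA : (0 : ℝ) < A := mod_cast one_pos.trans_le (h.one_le hfin)
  have hsum : Summable fun k : ℕ => A ^ (2 * k + 1) * E k := summable_pow_mul_exp_neg_four_pow hA hc
  refine ⟨(∑' k : ℕ, A ^ (2 * k + 1) * E k).toNNReal, fun x r hr => ?_⟩
  have hV := h.measureReal_ball_pos hfin x hr
  have hmeas (k : ℕ) : Measurable ((toMeasurable μ (ball x (2 ^ k * r))).indicator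
      fun _ => ENNReal.ofReal (A ^ (k + 1) * E k / μ.real (ball x r))) :=
    measurable_const.indicator (measurableSet_toMeasurable _ _)
  refine ⟨fun y => ∑' k : ℕ, (toMeasurable μ (ball x (2 ^ k * r))).indicator
    (fun _ => ENNReal.ofReal (A ^ (k + 1) * E k / μ.real (ball x r))) y, .tsum hmeas, ?_,
    fun y => ?_⟩
  · change _ ≤ ENNReal.ofReal _
    rw [lintegral_tsum fun k => (hmeas k).aemeasurable,
      ENNReal.ofReal_tsum_of_nonneg (fun k => by positivity) hsum]
    refine ENNReal.tsum_le_tsum fun k => ?_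
    rw [lintegral_indicator_const (measurableSet_toMeasurable _ _), measure_toMeasurable,
      ← ofReal_measureReal (hfin _ _), ← ENNReal.ofReal_mul (by positivity)]
    refine ENNReal.ofReal_le_ofReal ?_
    calc A ^ (k + 1) * E k / μ.real (ball x r) * μ.real (ball x (2 ^ k * r))
        ≤ A ^ (k + 1) * E k / μ.real (ball x r) * (A ^ k * μ.real (ball x r)) := by
          gcongr; exact h.measureReal_ball_two_pow_mul_le hfin x hr k
      _ = A ^ (2 * k + 1) * E k := by field_simp; ring
  · obtain ⟨k, hlt, hle⟩ := exists_dyadic_shell (d := dist x y) hr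
    refine le_trans ?_ (ENNReal.le_tsum k)
    rw [indicator_of_mem (subset_toMeasurable _ _ (mem_ball'.2 hlt))]
    exact ENNReal.ofReal_le_ofReal (h.gaussian_le_of_shell hfin hc.le hr hlt hle)

lemma IsDoublingWith.exists_integrable_gaussian_le (h : IsDoublingWith μ A)
    (hfin : ∀ x r, μ (ball x r) ≠ ⊤) {c : ℝ} (hc : 0 < c) :
    ∃ K : ℝ, 0 ≤ K ∧ ∀ (x : M) (r : ℝ), 0 < r → ∃ φ : M → ℝ, Integrable φ μ ∧ ∫ y, φ y ∂μ ≤ K ∧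
      ∀ᵐ y ∂μ, (√(μ.real (ball x r) * μ.real (ball y r)))⁻¹ *
        Real.exp (-c * dist x y ^ 2 / r ^ 2) ≤ φ y := by
  obtain ⟨K, hK⟩ := h.exists_measurable_gaussian_le hfin hc
  refine ⟨K, K.2, fun x r hr => ?_⟩
  obtain ⟨Φ, hΦm, hΦK, hΦ⟩ := hK x r hr
  have hΦtop : ∫⁻ y, Φ y ∂μ ≠ ⊤ := ne_top_of_le_ne_top ENNReal.coe_ne_top hΦK
  have hae := ae_lt_top hΦm hΦtop
  refine ⟨fun y => (Φ y).toReal, integrable_toReal_of_lintegral_ne_top hΦm.aemeasurable hΦtop, ?_,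
    ?_⟩
  · rw [integral_toReal hΦm.aemeasurable hae]
    exact ENNReal.toReal_mono ENNReal.coe_ne_top hΦK
  · filter_upwards [hae] with y hy
    exact (ENNReal.ofReal_le_iff_le_toReal hy.ne).1 (hΦ y)

end Doubling

/-! ### Time derivatives of the semigroup -/

/-- A bounded measurable function, the class of inputs of `e^{-tL}`. Boundedness is pointwise rather
than essential, as in `supNorm`. -/
structure BddMeasurable {M : Type*} [MeasurableSpace M] (f : M → ℝ) : Prop where
  measurable : Measurable f
  bounded : ∃ B, ∀ x, |f x| ≤ B

/-- A jointly measurable family of bounded functions; the bound may depend on the parameter. -/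
structure BddMeasurableFamily {ι M : Type*} [MeasurableSpace ι] [MeasurableSpace M]
    (h : ι → M → ℝ) : Prop where
  measurable : Measurable (Function.uncurry h)
  bounded : ∀ i, ∃ B, ∀ x, |h i x| ≤ B

namespace BddMeasurableFamily

variable {ι M : Type*} [MeasurableSpace ι] [MeasurableSpace M] {h k : ι → M → ℝ}

lemma const {f : M → ℝ} (hf : BddMeasurable f) : BddMeasurableFamily fun _ : ι => f :=
  ⟨hf.measurable.comp measurable_snd, fun _ => hf.bounded⟩

lemma apply (hh : BddMeasurableFamily h) (i : ι) : BddMeasurable (h i) :=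
  ⟨hh.measurable.comp measurable_prodMk_left, hh.bounded i⟩

lemma add (hh : BddMeasurableFamily h) (hk : BddMeasurableFamily k) :
    BddMeasurableFamily fun i x => h i x + k i x := by
  refine ⟨hh.measurable.add hk.measurable, fun i => ?_⟩
  obtain ⟨A, hA⟩ := hh.bounded i
  obtain ⟨B, hB⟩ := hk.bounded i
  exact ⟨A + B, fun x => (abs_add_le _ _).trans (add_le_add (hA x) (hB x))⟩

lemma mul (hh : BddMeasurableFamily h) (hk : BddMeasurableFamily k) :
    BddMeasurableFamily fun i x => h i x * k i x := by
  refine ⟨hh.measurable.mul hk.measurable, fun i => ?_⟩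
  obtain ⟨A, hA⟩ := hh.bounded i
  obtain ⟨B, hB⟩ := hk.bounded i
  refine ⟨A * B, fun x => ?_⟩
  rw [abs_mul]
  exact mul_le_mul (hA x) (hB x) (abs_nonneg _) ((abs_nonneg _).trans (hA x))

lemma of_scalar {c : ι → ℝ} (hc : Measurable c) : BddMeasurableFamily fun i (_ : M) => c i :=
  ⟨hc.comp measurable_fst, fun i => ⟨|c i|, fun _ => le_rfl⟩⟩

lemma sum {κ : Type*} {s : Finset κ} {u : κ → ι → M → ℝ}
    (hu : ∀ n ∈ s, BddMeasurableFamily (u n)) :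
    BddMeasurableFamily fun i x => ∑ n ∈ s, u n i x := by
  classical
  induction s using Finset.induction_on with
  | empty => simpa using of_scalar (measurable_const (a := (0 : ℝ)))
  | insert n s hn ih =>
    simp only [Finset.sum_insert hn]
    exact (hu n (s.mem_insert_self n)).add (ih fun m hm => hu m (Finset.mem_insert_of_mem hm))

end BddMeasurableFamily

namespace HeatKernelSetup

variable {M : Type*} [MeasurableSpace M] [MetricSpace M] (H : HeatKernelSetup M)

lemma isDoublingWith : IsDoublingWith H.μ H.C_D.toNNReal := H.doubling

instance [Nonempty M] : NeZero H.μ := by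
  refine ⟨fun h0 => ?_⟩
  simpa [h0] using H.conservative 1 one_pos (Classical.arbitrary M)

lemma measure_ball_ne_top (x : M) (r : ℝ) : H.μ (ball x r) ≠ ⊤ := by
  suffices hx : H.μ (ball x 1) ≠ ⊤ from H.isDoublingWith.measure_ball_ne_top one_pos hx x r
  intro hx
  obtain ⟨C, _, c, _, hUE⟩ := H.UE 0
  have hp (y : M) : H.p 1 x y = 0 := by simpa [hx] using hUE 1 one_pos le_rfl x y
  simpa [hp] using H.conservative 1 one_pos x

instance : SigmaFinite H.μ := by
  rcases isEmpty_or_nonempty M with _ | _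
  · rw [Measure.eq_zero_of_isEmpty H.μ]; infer_instance
  inhabit M
  refine ⟨⟨⟨fun n : ℕ => toMeasurable H.μ (ball default n), fun _ => trivial, fun n => ?_, ?_⟩⟩⟩
  · rw [measure_toMeasurable]
    exact (H.measure_ball_ne_top _ _).lt_top
  · refine eq_univ_of_forall fun y => ?_
    obtain ⟨n, hn⟩ := exists_nat_gt (dist y default)
    exact mem_iUnion.2 ⟨n, subset_toMeasurable _ _ hn⟩

/-- The time derivative `∂_t^m p_t(x, y)`. -/
def kernelDeriv (m : ℕ) (t : ℝ) (x y : M) : ℝ := iteratedDeriv m (fun s => H.p s x y) t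

/-- The time derivative `∂_t^m e^{-tL} f`. -/
def semigroupDeriv (m : ℕ) (t : ℝ) (f : M → ℝ) (x : M) : ℝ :=
  iteratedDeriv m (fun s => H.S s f x) t

@[simp]
lemma semigroupDeriv_zero (t : ℝ) (f : M → ℝ) : H.semigroupDeriv 0 t f = H.S t f := by
  ext x; simp [semigroupDeriv]

lemma hasDerivAt_kernelDeriv (m : ℕ) {t : ℝ} (ht : 0 < t) (x y : M) :
    HasDerivAt (fun s => H.kernelDeriv m s x y) (H.kernelDeriv (m + 1) t x y) t := by
  simpa only [kernelDeriv, iteratedDeriv_succ] using (H.smooth x y m t ht).hasDerivAt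

lemma measurable_kernelDeriv (m : ℕ) {t : ℝ} (ht : 0 < t) :
    Measurable (Function.uncurry (H.kernelDeriv m t)) := by
  induction m generalizing t with
  | zero => simpa [kernelDeriv, Function.uncurry_def] using H.p_meas t ht
  | succ m ih =>
    have htime (n : ℕ) : 0 < t + 1 / ((n : ℝ) + 1) := by positivity
    refine measurable_of_tendsto_metrizable
      (fun n : ℕ => ((ih (htime n)).sub (ih ht)).const_mul ((n : ℝ) + 1)) ?_
    rw [tendsto_pi_nhds]
    rintro ⟨x, y⟩
    have htends : Filter.Tendsto (fun n : ℕ => t + 1 / ((n : ℝ) + 1)) Filter.atTop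
        (nhdsWithin t {t}ᶜ) := by
      refine tendsto_nhdsWithin_of_tendsto_nhds_of_eventually_within _
        (by simpa using tendsto_one_div_add_atTop_nhds_zero_nat.const_add t)
        (.of_forall fun n => ?_)
      simpa using by positivity
    refine ((H.hasDerivAt_kernelDeriv m ht x y).tendsto_slope.comp htends).congr fun n => ?_
    simp [slope_def_field, div_eq_mul_inv, mul_comm, Function.uncurry]

lemma measurable_kernelDeriv_uncurry (m : ℕ) :
    Measurable fun z : Ioi (0 : ℝ) × M × M => H.kernelDeriv m z.1 z.2.1 z.2.2 := by
  refine measurable_uncurry_of_continuous_of_measurable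
    (u := fun (t : Ioi (0 : ℝ)) (z : M × M) => H.kernelDeriv m t z.1 z.2)
    (fun z => ?_) (fun t => H.measurable_kernelDeriv m t.2)
  exact continuous_iff_continuousAt.2 fun t =>
    (H.hasDerivAt_kernelDeriv m t.2 z.1 z.2).continuousAt.comp continuousAt_subtype_val

lemma integrable_p {t : ℝ} (ht : 0 < t) (x : M) : Integrable (H.p t x) H.μ := by
  by_contra h
  simpa [integral_undef h] using H.conservative t ht x

-- For `T ≤ t ≤ 4T` the Gaussian at time `t` is dominated by a wider Gaussian at the fixed time `T`.
lemma exists_integrable_kernelDeriv_le (m : ℕ) :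
    ∃ K : ℝ, 0 ≤ K ∧ ∀ T, 0 < T → ∀ x : M, ∃ φ : M → ℝ, Integrable φ H.μ ∧
      ∫ y, φ y ∂H.μ ≤ K / T ^ m ∧
      ∀ᵐ y ∂H.μ, ∀ t ∈ Icc T (4 * T), t ≤ 1 → |H.kernelDeriv m t x y| ≤ φ y := by
  rcases isEmpty_or_nonempty M with _ | _
  · exact ⟨0, le_rfl, fun _ _ x => isEmptyElim x⟩
  obtain ⟨C, hC, c, hc, hUE⟩ := H.UE m
  obtain ⟨K, hK, hφ⟩ := H.isDoublingWith.exists_integrable_gaussian_le H.measure_ball_ne_top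
    (c := c / 4) (by positivity)
  refine ⟨C * K, by positivity, fun T hT x => ?_⟩
  obtain ⟨φ, hφi, hφK, hφle⟩ := hφ x √T (Real.sqrt_pos.2 hT)
  refine ⟨fun y => C / T ^ m * φ y, hφi.const_mul _, ?_, ?_⟩
  · rw [integral_const_mul, mul_div_right_comm]
    gcongr
  filter_upwards [hφle] with y hy t ⟨hTt, htT⟩ ht1
  have ht : 0 < t := hT.trans_le hTt
  have hvol (z : M) : 0 < H.μ.real (ball z √T) ∧
      H.μ.real (ball z √T) ≤ H.μ.real (ball z √t) :=
    ⟨H.isDoublingWith.measureReal_ball_pos H.measure_ball_ne_top z (Real.sqrt_pos.2 hT),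
      measureReal_mono (ball_subset_ball (Real.sqrt_le_sqrt hTt)) (H.measure_ball_ne_top _ _)⟩
  have hprod := mul_le_mul (hvol x).2 (hvol y).2 (hvol y).1.le ((hvol x).1.le.trans (hvol x).2)
  have hexp : Real.exp (-c * dist x y ^ 2 / t) ≤ Real.exp (-(c / 4) * dist x y ^ 2 / √T ^ 2) := by
    rw [Real.exp_le_exp, Real.sq_sqrt hT.le, div_le_div_iff₀ ht hT]
    nlinarith [mul_nonneg hc.le (sq_nonneg (dist x y))]
  have hpos := mul_pos (hvol x).1 (hvol y).1
  have hmain : |H.kernelDeriv m t x y| * t ^ m ≤ C * φ y := by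
    calc |H.kernelDeriv m t x y| * t ^ m = |t ^ m * H.kernelDeriv m t x y| := by
          rw [abs_mul, abs_of_pos (pow_pos ht m), mul_comm]
      _ ≤ C / √(H.μ.real (ball x √t) * H.μ.real (ball y √t)) * Real.exp (-c * dist x y ^ 2 / t) :=
          hUE t ht ht1 x y
      _ ≤ C / √(H.μ.real (ball x √T) * H.μ.real (ball y √T)) *
            Real.exp (-(c / 4) * dist x y ^ 2 / √T ^ 2) := by gcongr
      _ ≤ C * φ y := by rw [div_eq_mul_inv, mul_assoc]; gcongr
  rw [div_mul_eq_mul_div, le_div_iff₀ (by positivity)]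
  exact (mul_le_mul_of_nonneg_left (by gcongr) (abs_nonneg _)).trans hmain

lemma exists_integral_abs_kernelDeriv_le (m : ℕ) :
    ∃ K : ℝ, 0 ≤ K ∧ ∀ t ∈ Ioc (0 : ℝ) 1, ∀ x : M,
      Integrable (H.kernelDeriv m t x) H.μ ∧ ∫ y, |H.kernelDeriv m t x y| ∂H.μ ≤ K / t ^ m := by
  obtain ⟨K, hK, hφ⟩ := H.exists_integrable_kernelDeriv_le m
  refine ⟨K, hK, fun t ⟨ht, ht1⟩ x => ?_⟩
  obtain ⟨φ, hφi, hφK, hφle⟩ := hφ t ht x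
  have hle : ∀ᵐ y ∂H.μ, |H.kernelDeriv m t x y| ≤ φ y := by
    filter_upwards [hφle] with y hy using hy t ⟨le_rfl, by linarith⟩ ht1
  have hint : Integrable (H.kernelDeriv m t x) H.μ :=
    hφi.mono' ((H.measurable_kernelDeriv m ht).comp measurable_prodMk_left).aestronglyMeasurable hle
  exact ⟨hint, (integral_mono_ae hint.abs hφi hle).trans hφK⟩

end HeatKernelSetup

lemma supNorm_le_ofReal {M : Type*} {f : M → ℝ} {B : ℝ} (hB : ∀ x, |f x| ≤ B) :
    supNorm f ≤ ENNReal.ofReal B := by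
  refine iSup_le fun x => ?_
  rw [← enorm_eq_nnnorm, ← ofReal_norm]
  exact ENNReal.ofReal_le_ofReal (hB x)

lemma abs_integral_mul_le {M : Type*} [MeasurableSpace M] {μ : Measure M} {u f : M → ℝ} {B : ℝ}
    (hu : Integrable u μ) (hB : ∀ x, |f x| ≤ B) : |∫ y, u y * f y ∂μ| ≤ (∫ y, |u y| ∂μ) * B := by
  rw [← integral_mul_const, ← Real.norm_eq_abs]
  refine norm_integral_le_of_norm_le (hu.abs.mul_const B) (.of_forall fun y => ?_)
  rw [norm_mul]
  exact mul_le_mul_of_nonneg_left (hB y) (norm_nonneg _)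

namespace BddMeasurable

variable {M : Type*} [MeasurableSpace M] {μ : Measure M} {f u : M → ℝ}

lemma supNorm_lt_top (hf : BddMeasurable f) : supNorm f < ⊤ := by
  obtain ⟨B, hB⟩ := hf.bounded
  exact (supNorm_le_ofReal hB).trans_lt ENNReal.ofReal_lt_top

lemma integrable_mul (hf : BddMeasurable f) (hu : Integrable u μ) :
    Integrable (fun y => u y * f y) μ := by
  obtain ⟨B, hB⟩ := hf.bounded
  exact hu.mul_bdd hf.measurable.aestronglyMeasurable (.of_forall hB)

end BddMeasurable

namespace HeatKernelSetup

variable {M : Type*} [MeasurableSpace M] [MetricSpace M] (H : HeatKernelSetup M)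
  {f g : M → ℝ} {B s t : ℝ}

lemma abs_S_le (ht : 0 < t) (hB : ∀ x, |f x| ≤ B) (x : M) : |H.S t f x| ≤ B := by
  refine (abs_integral_mul_le (H.integrable_p ht x) hB).trans_eq ?_
  simp [abs_of_nonneg (H.p_nonneg t ht x _), H.conservative t ht x]

lemma semigroupDeriv_eq_integral (hf : BddMeasurable f) (m : ℕ) (ht : 0 < t) (x : M) :
    H.semigroupDeriv m t f x = ∫ y, H.kernelDeriv m t x y * f y ∂H.μ :=
  H.diff_under_int f hf.measurable hf.supNorm_lt_top m x t ht

lemma measurable_semigroupDeriv_family {ι : Type*} [MeasurableSpace ι] {h : ι → M → ℝ}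
    (hh : BddMeasurableFamily h) {τ : ι → ℝ} (hτ : Measurable τ) (hpos : ∀ i, 0 < τ i) (m : ℕ) :
    Measurable (Function.uncurry fun i => H.semigroupDeriv m (τ i) (h i)) := by
  have hkernel : Measurable fun z : (ι × M) × M => H.kernelDeriv m (τ z.1.1) z.1.2 z.2 :=
    (H.measurable_kernelDeriv_uncurry m).comp
      (((hτ.comp (measurable_fst.comp measurable_fst)).subtype_mk (h := fun z => hpos z.1.1)).prodMk
        ((measurable_snd.comp measurable_fst).prodMk measurable_snd))
  have hfun : Measurable fun z : (ι × M) × M => h z.1.1 z.2 :=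
    hh.measurable.comp ((measurable_fst.comp measurable_fst).prodMk measurable_snd)
  convert ((hkernel.mul hfun).stronglyMeasurable.integral_prod_right' (ν := H.μ)).measurable
    using 1
  ext ⟨i, x⟩
  exact H.semigroupDeriv_eq_integral (hh.apply i) m (hpos i) x

lemma bddMeasurable_S (hf : BddMeasurable f) (ht : 0 < t) : BddMeasurable (H.S t f) := by
  refine ⟨?_, hf.bounded.imp fun B hB => H.abs_S_le ht hB⟩
  rw [← semigroupDeriv_zero]
  exact (H.measurable_semigroupDeriv_family (ι := Unit) (.const hf) measurable_const
    (fun _ => ht) 0).comp (measurable_prodMk_left (x := ()))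

lemma integrable_p_mul_p_mul (hf : BddMeasurable f) (hs : 0 < s) (ht : 0 < t) (x : M) :
    Integrable (fun z : M × M => H.p s x z.1 * (H.p t z.1 z.2 * f z.2)) (H.μ.prod H.μ) := by
  obtain ⟨B, hB⟩ := hf.bounded
  have hmeas : Measurable fun z : M × M => H.p s x z.1 * (H.p t z.1 z.2 * f z.2) :=
    ((H.p_meas s hs).comp (measurable_const.prodMk measurable_fst)).mul
      ((H.p_meas t ht).mul (hf.measurable.comp measurable_snd))
  rw [integrable_prod_iff hmeas.aestronglyMeasurable]
  refine ⟨.of_forall fun y => (hf.integrable_mul (H.integrable_p ht y)).const_mul (H.p s x y), ?_⟩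
  refine ((H.integrable_p hs x).mul_const B).mono'
    hmeas.norm.stronglyMeasurable.integral_prod_right'.aestronglyMeasurable
    (.of_forall fun y => ?_)
  have habs : ∀ z, |(|f z|)| ≤ B := by simpa only [abs_abs] using hB
  have hslice := H.abs_S_le ht habs y
  simp_rw [norm_mul, integral_const_mul, Real.norm_of_nonneg (H.p_nonneg s hs x y),
    Real.norm_of_nonneg (H.p_nonneg t ht y _), norm_mul, Real.norm_eq_abs,
    abs_of_nonneg (H.p_nonneg s hs x y)]
  exact mul_le_mul_of_nonneg_left hslice (H.p_nonneg s hs x y)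

lemma S_add (hf : BddMeasurable f) (hs : 0 < s) (ht : 0 < t) : H.S (s + t) f = H.S s (H.S t f) := by
  ext x
  have hkernel (z : M) : H.p (s + t) x z * f z = ∫ y, H.p s x y * (H.p t y z * f z) ∂H.μ := by
    rw [H.semigroup s t hs ht, ← integral_mul_const]
    simp_rw [mul_assoc]
  simp_rw [S, hkernel, ← integral_const_mul]
  exact integral_integral_swap (f := fun z y => H.p s x y * (H.p t y z * f z))
    (H.integrable_p_mul_p_mul hf hs ht x).swap

lemma semigroupDeriv_time_add (hf : BddMeasurable f) (m : ℕ) (hs : 0 < s) (ht : 0 < t) :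
    H.semigroupDeriv m (s + t) f = H.semigroupDeriv m s (H.S t f) := by
  ext x
  have hev : (fun u => H.S (u + t) f x) =ᶠ[nhds s] fun u => H.S u (H.S t f) x := by
    filter_upwards [lt_mem_nhds hs] with u hu
    rw [H.S_add hf hu ht]
  rw [semigroupDeriv, semigroupDeriv, ← hev.iteratedDeriv_eq m]
  exact (congrFun (iteratedDeriv_comp_add_const m (fun u => H.S u f x) t) s).symm

lemma hasDerivAt_semigroupDeriv_of_lt_one (hf : BddMeasurable f) (m : ℕ) (ht : 0 < t) (ht1 : t < 1)
    (x : M) :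
    HasDerivAt (fun s => H.semigroupDeriv m s f x) (H.semigroupDeriv (m + 1) t f x) t := by
  obtain ⟨K, _, hK⟩ := H.exists_integrable_kernelDeriv_le (m + 1)
  obtain ⟨φ, hφi, _, hφ⟩ := hK (t / 2) (by linarith) x
  obtain ⟨L, _, hL⟩ := H.exists_integral_abs_kernelDeriv_le m
  obtain ⟨B, hB⟩ := hf.bounded
  have hnhds : Ioo (t / 2) (min 1 (2 * t)) ∈ nhds t :=
    Ioo_mem_nhds (by linarith) (lt_min ht1 (by linarith))
  have hmeas (n : ℕ) {u : ℝ} (hu : 0 < u) :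
      AEStronglyMeasurable (fun y => H.kernelDeriv n u x y * f y) H.μ :=
    (((H.measurable_kernelDeriv n hu).comp measurable_prodMk_left).mul
      hf.measurable).aestronglyMeasurable
  have hbound : ∀ᵐ y ∂H.μ, ∀ u ∈ Ioo (t / 2) (min 1 (2 * t)),
      ‖H.kernelDeriv (m + 1) u x y * f y‖ ≤ φ y * B := by
    filter_upwards [hφ] with y hy u ⟨hu, hu'⟩
    have hle := hy u ⟨hu.le, by linarith [hu'.trans_le (min_le_right 1 (2 * t))]⟩
      (hu'.le.trans (min_le_left _ _))
    rw [norm_mul]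
    exact mul_le_mul hle (hB y) (norm_nonneg _) ((abs_nonneg _).trans hle)
  have hderiv := hasDerivAt_integral_of_dominated_loc_of_deriv_le hnhds
    (by filter_upwards [hnhds] with u hu using hmeas m ((half_pos ht).trans hu.1))
    (hf.integrable_mul (hL t ⟨ht, ht1.le⟩ x).1) (hmeas (m + 1) ht) hbound (hφi.mul_const B)
    (.of_forall fun y u hu =>
      (H.hasDerivAt_kernelDeriv m ((half_pos ht).trans hu.1) x y).mul_const (f y))
  rw [H.semigroupDeriv_eq_integral hf (m + 1) ht x]
  refine hderiv.2.congr_of_eventuallyEq ?_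
  filter_upwards [lt_mem_nhds ht] with u hu using H.semigroupDeriv_eq_integral hf m hu x

lemma hasDerivAt_semigroupDeriv (hf : BddMeasurable f) (m : ℕ) (ht : 0 < t) (x : M) :
    HasDerivAt (fun s => H.semigroupDeriv m s f x) (H.semigroupDeriv (m + 1) t f x) t := by
  rcases lt_or_ge t 1 with ht1 | ht1
  · exact H.hasDerivAt_semigroupDeriv_of_lt_one hf m ht ht1 x
  have hr : 0 < t - 1 / 2 := by linarith
  have hshift (n : ℕ) {u : ℝ} (hu : t - 1 / 2 < u) : H.semigroupDeriv n u f x =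
      H.semigroupDeriv n (u - (t - 1 / 2)) (H.S (t - 1 / 2) f) x := by
    rw [← H.semigroupDeriv_time_add hf n (sub_pos.2 hu) hr, sub_add_cancel]
  rw [hshift (m + 1) (by linarith)]
  refine ((H.hasDerivAt_semigroupDeriv_of_lt_one (H.bddMeasurable_S hf hr) m (by linarith)
    (by linarith) x).comp_sub_const t (t - 1 / 2)).congr_of_eventuallyEq ?_
  filter_upwards [lt_mem_nhds (by linarith : t - 1 / 2 < t)] with u hu using hshift m hu

lemma exists_abs_semigroupDeriv_le (m : ℕ) :
    ∃ K : ℝ, 0 ≤ K ∧ ∀ {f : M → ℝ} {B s t : ℝ}, BddMeasurable f → (∀ x, |f x| ≤ B) →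
      s ∈ Ioc 0 1 → s ≤ t → ∀ x, |H.semigroupDeriv m t f x| ≤ K / s ^ m * B := by
  obtain ⟨K, hK, hL⟩ := H.exists_integral_abs_kernelDeriv_le m
  have hbase {f : M → ℝ} {B s : ℝ} (hf : BddMeasurable f) (hB : ∀ x, |f x| ≤ B)
      (hs : s ∈ Ioc 0 1) (x : M) : |H.semigroupDeriv m s f x| ≤ K / s ^ m * B := by
    have hB0 : 0 ≤ B := (abs_nonneg _).trans (hB x)
    rw [H.semigroupDeriv_eq_integral hf m hs.1 x]
    exact (abs_integral_mul_le (hL s hs x).1 hB).trans (by gcongr; exact (hL s hs x).2)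
  refine ⟨K, hK, fun {f B s t} hf hB hs hst x => ?_⟩
  rcases hst.eq_or_lt with rfl | hlt
  · exact hbase hf hB hs x
  · have hr : 0 < t - s := sub_pos.2 hlt
    rw [← add_sub_cancel s t, H.semigroupDeriv_time_add hf m hs.1 hr]
    exact hbase (H.bddMeasurable_S hf hr) (H.abs_S_le hr hB) hs x

lemma bddMeasurableFamily_semigroupDeriv {ι : Type*} [MeasurableSpace ι] {h : ι → M → ℝ}
    (hh : BddMeasurableFamily h) {τ : ι → ℝ} (hτ : Measurable τ) (hpos : ∀ i, 0 < τ i) (m : ℕ) :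
    BddMeasurableFamily fun i => H.semigroupDeriv m (τ i) (h i) := by
  obtain ⟨K, _, hK⟩ := H.exists_abs_semigroupDeriv_le m
  refine ⟨H.measurable_semigroupDeriv_family hh hτ hpos m, fun i => ?_⟩
  obtain ⟨B, hB⟩ := hh.bounded i
  exact ⟨_, hK (hh.apply i) hB ⟨lt_min (hpos i) one_pos, min_le_right _ _⟩ (min_le_left _ _)⟩

lemma bddMeasurable_semigroupDeriv (hf : BddMeasurable f) (m : ℕ) (ht : 0 < t) :
    BddMeasurable (H.semigroupDeriv m t f) :=
  (H.bddMeasurableFamily_semigroupDeriv (ι := Unit) (.const hf) measurable_const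
    (fun _ => ht) m).apply ()

-- Both sides agree for `k = 0`; differentiate in `t` under the integral defining `e^{-sL}`.
lemma S_semigroupDeriv (hf : BddMeasurable f) (k : ℕ) (hs : 0 < s) (ht : 0 < t) :
    H.S s (H.semigroupDeriv k t f) = H.semigroupDeriv k (s + t) f := by
  ext x
  induction k generalizing t with
  | zero => rw [semigroupDeriv_zero, semigroupDeriv_zero, H.S_add hf hs ht]
  | succ k ih =>
    obtain ⟨K, _, hK⟩ := H.exists_abs_semigroupDeriv_le (k + 1)
    obtain ⟨B, hB⟩ := hf.bounded
    have hnhds : Ioi (t / 2) ∈ nhds t := Ioi_mem_nhds (half_lt_self ht)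
    have hpos {u : ℝ} (hu : u ∈ Ioi (t / 2)) : 0 < u := (half_pos ht).trans hu
    have hint (n : ℕ) {u : ℝ} (hu : 0 < u) :
        Integrable (fun y => H.p s x y * H.semigroupDeriv n u f y) H.μ :=
      (H.bddMeasurable_semigroupDeriv hf n hu).integrable_mul (H.integrable_p hs x)
    have hbound (y : M) (u : ℝ) (hu : u ∈ Ioi (t / 2)) :
        ‖H.p s x y * H.semigroupDeriv (k + 1) u f y‖
          ≤ H.p s x y * (K / (min (t / 2) 1) ^ (k + 1) * B) := by
      rw [norm_mul, Real.norm_of_nonneg (H.p_nonneg s hs x y)]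
      exact mul_le_mul_of_nonneg_left (hK hf hB ⟨lt_min (half_pos ht) one_pos, min_le_right _ _⟩
        ((min_le_left _ _).trans hu.le) y) (H.p_nonneg s hs x y)
    have hleft := hasDerivAt_integral_of_dominated_loc_of_deriv_le hnhds
      (by filter_upwards [hnhds] with u hu using (hint k (hpos hu)).aestronglyMeasurable)
      (hint k ht) (hint (k + 1) ht).aestronglyMeasurable (.of_forall hbound)
      ((H.integrable_p hs x).mul_const _)
      (.of_forall fun y u hu => (H.hasDerivAt_semigroupDeriv hf k (hpos hu) y).const_mul _)
    have hright := (H.hasDerivAt_semigroupDeriv hf k (add_pos hs ht) x).comp_const_add s t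
    refine (hleft.2.congr_of_eventuallyEq ?_).unique hright
    filter_upwards [hnhds] with u hu using (ih (hpos hu)).symm

lemma semigroupDeriv_semigroupDeriv (hf : BddMeasurable f) (j k : ℕ) (hs : 0 < s) (ht : 0 < t) :
    H.semigroupDeriv j s (H.semigroupDeriv k t f) = H.semigroupDeriv (j + k) (s + t) f := by
  ext x
  induction j generalizing s with
  | zero => rw [semigroupDeriv_zero, H.S_semigroupDeriv hf k hs ht, zero_add]
  | succ j ih =>
    have hleft := H.hasDerivAt_semigroupDeriv (H.bddMeasurable_semigroupDeriv hf k ht) j hs x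
    have hright := (H.hasDerivAt_semigroupDeriv hf (j + k) (add_pos hs ht) x).comp_add_const s t
    rw [Nat.add_right_comm]
    refine (hleft.congr_of_eventuallyEq ?_).unique hright
    filter_upwards [lt_mem_nhds hs] with u hu using (ih hu).symm

lemma semigroupDeriv_sum {κ : Type*} {A : Finset κ} {u : κ → M → ℝ}
    (hu : ∀ k ∈ A, BddMeasurable (u k)) (c : κ → ℝ) (m : ℕ) (ht : 0 < t) (x : M) :
    H.semigroupDeriv m t (fun y => ∑ k ∈ A, c k * u k y) x =
      ∑ k ∈ A, c k * H.semigroupDeriv m t (u k) x := by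
  have hsum : BddMeasurable fun y => ∑ k ∈ A, c k * u k y :=
    (BddMeasurableFamily.sum (ι := Unit) fun k hk =>
      (BddMeasurableFamily.of_scalar measurable_const).mul (.const (hu k hk))).apply ()
  induction m generalizing t with
  | zero =>
    simp only [semigroupDeriv_zero, S, Finset.mul_sum, ← integral_const_mul]
    rw [integral_finsetSum _ fun k hk => ?_]
    · simp_rw [mul_left_comm]
    · simpa only [mul_left_comm] using
        ((hu k hk).integrable_mul (H.integrable_p ht x)).const_mul (c k)
  | succ m ih =>
    refine (H.hasDerivAt_semigroupDeriv hsum m ht x).unique ?_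
    refine (HasDerivAt.fun_sum fun k hk =>
      (H.hasDerivAt_semigroupDeriv (hu k hk) m ht x).const_mul (c k)).congr_of_eventuallyEq ?_
    filter_upwards [lt_mem_nhds ht] with v hv using ih hv

lemma semigroupDeriv_fun_add (hf : BddMeasurable f) (hg : BddMeasurable g) (m : ℕ) (ht : 0 < t)
    (x : M) : H.semigroupDeriv m t (fun y => f y + g y) x =
      H.semigroupDeriv m t f x + H.semigroupDeriv m t g x := by
  simpa using H.semigroupDeriv_sum (A := Finset.univ) (u := ![f, g])
    (by simpa using ⟨hf, hg⟩) 1 m ht x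

end HeatKernelSetup

/-! ### Polynomial functional calculus and almost orthogonality -/

section Calculus

lemma abs_le_of_abs_deriv_le_rpow {w w' : ℝ → ℝ} {e A t : ℝ} (he : e < 0) (ht : t ∈ Ioc 0 1)
    (hw : ∀ r ∈ Icc t 1, HasDerivAt w (w' r) r) (hle : ∀ r ∈ Icc t 1, |w' r| ≤ A * r ^ (e - 1)) :
    |w t| ≤ |w 1| + A / (-e) * t ^ e := by
  have hA : 0 ≤ A := (abs_nonneg _).trans (by simpa using hle 1 (right_mem_Icc.2 ht.2))
  have h0 : (0 : ℝ) ∉ uIcc t 1 := notMem_uIcc_of_lt ht.1 one_pos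
  have hdiff : |w 1 - w t| ≤ ∫ r in t..1, A * r ^ (e - 1) := by
    refine norm_sub_le_integral_of_norm_deriv_le_of_le ht.2
      (fun r hr => (hw r hr).continuousAt.continuousWithinAt)
      (fun r hr => (hw r (Ioo_subset_Icc_self hr)).differentiableAt.differentiableWithinAt)
      (.of_forall fun r hr => ?_)
      ((intervalIntegral.intervalIntegrable_rpow (Or.inr h0)).const_mul A)
    have hr' := Ioo_subset_Icc_self hr
    simpa only [(hw r hr').deriv, Real.norm_eq_abs] using hle r hr'
  rw [intervalIntegral.integral_const_mul,
    integral_rpow (Or.inr ⟨by linarith, h0⟩), sub_add_cancel, Real.one_rpow] at hdiff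
  have hval : A * ((1 - t ^ e) / e) = A / (-e) * t ^ e - A / (-e) := by
    field_simp
    ring
  have hnonneg : 0 ≤ A / (-e) := div_nonneg hA (by linarith)
  have htri : |w t| ≤ |w 1| + |w 1 - w t| := by
    rw [abs_sub_comm]
    linarith [abs_sub_abs_le_abs_sub (w t) (w 1)]
  linarith

lemma pow_mul_pow_div_add_pow_le {s t : ℝ} (hs : 0 < s) (ht : t ∈ Ioc 0 1) {j k : ℕ}
    (hj : 1 ≤ j ∨ s = 1) (hk : 1 ≤ k) :
    s ^ j * t ^ k / (s + t) ^ (j + k) ≤ 2 * (s * t / (s + t) ^ 2) := by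
  obtain ⟨ht0, ht1⟩ := ht
  have hst : 0 < s + t := by positivity
  have hsle : s / (s + t) ≤ 1 := (div_le_one hst).2 (by linarith)
  have htle : t / (s + t) ≤ 1 := (div_le_one hst).2 (by linarith)
  have hspow : (s / (s + t)) ^ j ≤ 2 * (s / (s + t)) := by
    rcases hj with hj | rfl
    · calc (s / (s + t)) ^ j ≤ s / (s + t) := pow_le_of_le_one (by positivity) hsle (by omega)
        _ ≤ 2 * (s / (s + t)) := le_mul_of_one_le_left (by positivity) one_le_two
    · calc (1 / (1 + t)) ^ j ≤ 1 := pow_le_one₀ (by positivity) hsle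
        _ ≤ 2 * (1 / (1 + t)) := by rw [mul_one_div, le_div_iff₀ hst]; linarith
  calc s ^ j * t ^ k / (s + t) ^ (j + k) = (s / (s + t)) ^ j * (t / (s + t)) ^ k := by
        rw [pow_add, div_pow, div_pow, div_mul_div_comm]
    _ ≤ 2 * (s / (s + t)) * (t / (s + t)) := by
        gcongr
        exact pow_le_of_le_one (by positivity) htle (by omega)
    _ = 2 * (s * t / (s + t) ^ 2) := by rw [mul_assoc, div_mul_div_comm, sq]

end Calculus

lemma one_le_of_mem_support_of_coeff_zero {R : Type*} [Semiring R] {u : Polynomial R}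
    (hu : u.coeff 0 = 0) {k : ℕ} (hk : k ∈ u.support) : 1 ≤ k := by
  rw [Nat.one_le_iff_ne_zero]
  rintro rfl
  exact Polynomial.mem_support_iff.1 hk hu

namespace HeatKernelSetup

open Polynomial in
/-- The operator `u(tL) e^{-tL}` for a polynomial `u`, with `(tL)^k e^{-tL}` read as
`(-t)^k ∂_t^k e^{-tL}`. All of `Q_t^{(a)}`, `P_t^{(b)}` and `(tL)P_t^{(b)}` are of this form. -/
def polyOp {M : Type*} [MeasurableSpace M] [MetricSpace M] (H : HeatKernelSetup M) (u : ℝ[X])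
    (t : ℝ) (f : M → ℝ) (x : M) : ℝ :=
  ∑ k ∈ u.support, u.coeff k * ((-t) ^ k * H.semigroupDeriv k t f x)

open Polynomial in
/-- The Taylor polynomial `∑_{k<b} X^k / k!` of the exponential, for which
`P_t^{(b)} = (expTaylor b)(tL) e^{-tL}`. -/
def expTaylor (b : ℕ) : ℝ[X] := PowerSeries.trunc b (PowerSeries.exp ℝ)

variable {M : Type*} [MeasurableSpace M] [MetricSpace M] (H : HeatKernelSetup M)
  {f g h : M → ℝ} {s t : ℝ} {k : ℕ}

lemma polyOp_eq_sum_of_support_subset {u : Polynomial ℝ} {A : Finset ℕ} (hA : u.support ⊆ A)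
    (t : ℝ) (f : M → ℝ) (x : M) :
    H.polyOp u t f x = ∑ k ∈ A, u.coeff k * ((-t) ^ k * H.semigroupDeriv k t f x) :=
  Polynomial.sum_eq_of_subset (fun k c => c * ((-t) ^ k * H.semigroupDeriv k t f x))
    (fun _ => zero_mul _) hA

lemma Q_eq (a : ℕ) (t : ℝ) (f : M → ℝ) (x : M) :
    H.Q a t f x = (-t) ^ a * H.semigroupDeriv a t f x := by
  rw [Q, semigroupDeriv, neg_pow t]

lemma Q_eq_polyOp (a : ℕ) (t : ℝ) (f : M → ℝ) : H.Q a t f = H.polyOp (.X ^ a) t f := by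
  ext x
  simp [Q_eq, polyOp, Polynomial.support_X_pow]

lemma coeff_expTaylor (b k : ℕ) :
    (expTaylor b).coeff k = if k < b then ((Nat.factorial k : ℝ))⁻¹ else 0 := by
  simp [expTaylor, PowerSeries.coeff_trunc, PowerSeries.coeff_exp]

lemma P_eq_polyOp (b : ℕ) (t : ℝ) (f : M → ℝ) : H.P b t f = H.polyOp (expTaylor b) t f := by
  ext x
  rw [polyOp_eq_sum_of_support_subset (A := Finset.range b)]
  · refine Finset.sum_congr rfl fun k hk => ?_
    rw [coeff_expTaylor, if_pos (Finset.mem_range.1 hk), semigroupDeriv, neg_pow t]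
    ring
  · intro k hk
    simp_all [coeff_expTaylor]

lemma LP_eq_polyOp (b : ℕ) (t : ℝ) (f : M → ℝ) :
    H.LP b t f = H.polyOp (.X * expTaylor b) t f := by
  ext x
  rw [polyOp_eq_sum_of_support_subset (A := Finset.range (b + 1)), Finset.sum_range_succ']
  · rw [Polynomial.coeff_X_mul_zero, zero_mul, add_zero]
    refine Finset.sum_congr rfl fun k hk => ?_
    rw [Polynomial.coeff_X_mul, coeff_expTaylor, if_pos (Finset.mem_range.1 hk), semigroupDeriv,
      neg_pow t]
    ring
  · intro k hk
    rcases k with _ | k <;> simp_all [coeff_expTaylor]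

lemma paraInner_eq_polyOp (b : ℕ) (g f : M → ℝ) (t : ℝ) (y : M) :
    H.paraInner b g f t y =
      H.polyOp (.X * expTaylor b) t
          (fun z => H.polyOp (.X ^ (b - 1)) t f z * H.polyOp (expTaylor b) t g z) y
        + H.polyOp (.X ^ (b - 1)) t
          (fun z => H.polyOp (.X * expTaylor b) t f z * H.polyOp (expTaylor b) t g z) y := by
  simp only [paraInner, Q_eq_polyOp, P_eq_polyOp, LP_eq_polyOp]

lemma bddMeasurableFamily_polyOp {ι : Type*} [MeasurableSpace ι] {h : ι → M → ℝ}
    (hh : BddMeasurableFamily h) {τ : ι → ℝ} (hτ : Measurable τ) (hpos : ∀ i, 0 < τ i)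
    (u : Polynomial ℝ) : BddMeasurableFamily fun i => H.polyOp u (τ i) (h i) :=
  .sum fun k _ => (BddMeasurableFamily.of_scalar measurable_const).mul
    ((BddMeasurableFamily.of_scalar (hτ.neg.pow_const k)).mul
      (H.bddMeasurableFamily_semigroupDeriv hh hτ hpos k))

lemma bddMeasurable_polyOp (hf : BddMeasurable f) (u : Polynomial ℝ) (ht : 0 < t) :
    BddMeasurable (H.polyOp u t f) :=
  (H.bddMeasurableFamily_polyOp (ι := Unit) (.const hf) measurable_const (fun _ => ht) u).apply ()

lemma Q_fun_add (hf : BddMeasurable f) (hg : BddMeasurable g) (j : ℕ) (hs : 0 < s) (x : M) :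
    H.Q j s (fun y => f y + g y) x = H.Q j s f x + H.Q j s g x := by
  simp only [Q_eq, H.semigroupDeriv_fun_add hf hg j hs, mul_add]

lemma Q_polyOp (hh : BddMeasurable h) (u : Polynomial ℝ) (j : ℕ) (hs : 0 < s) (ht : 0 < t)
    (x : M) : H.Q j s (H.polyOp u t h) x = ∑ k ∈ u.support,
      u.coeff k * ((-s) ^ j * (-t) ^ k * H.semigroupDeriv (j + k) (s + t) h x) := by
  have hsum : H.polyOp u t h =
      fun y => ∑ k ∈ u.support, u.coeff k * (-t) ^ k * H.semigroupDeriv k t h y := by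
    ext y; simp only [polyOp, mul_assoc]
  rw [Q_eq, hsum, H.semigroupDeriv_sum (fun k _ => H.bddMeasurable_semigroupDeriv hh k ht) _ j hs,
    Finset.mul_sum]
  refine Finset.sum_congr rfl fun k _ => ?_
  rw [H.semigroupDeriv_semigroupDeriv hh j k hs ht]
  ring

lemma exists_abs_mul_semigroupDeriv_add_le (j : ℕ) (hk : 1 ≤ k) :
    ∃ K : ℝ, 0 ≤ K ∧ ∀ {h : M → ℝ} {B s t : ℝ}, BddMeasurable h → (∀ x, |h x| ≤ B) →
      s ∈ Ioc 0 1 → t ∈ Ioc 0 1 → (1 ≤ j ∨ s = 1) → ∀ x,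
        |(-s) ^ j * (-t) ^ k * H.semigroupDeriv (j + k) (s + t) h x|
          ≤ K * (s * t / (s + t) ^ 2) * B := by
  obtain ⟨K, hK, hKle⟩ := H.exists_abs_semigroupDeriv_le (j + k)
  refine ⟨K * 2 ^ (j + k) * 2, by positivity, fun {h B s t} hh hB hs ht hj x => ?_⟩
  have hs0 := hs.1
  have ht0 := ht.1
  have hB0 : 0 ≤ B := (abs_nonneg _).trans (hB x)
  rw [abs_mul, abs_mul, abs_pow, abs_pow, abs_neg, abs_neg, abs_of_pos hs0, abs_of_pos ht0]
  calc s ^ j * t ^ k * |H.semigroupDeriv (j + k) (s + t) h x|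
      ≤ s ^ j * t ^ k * (K / ((s + t) / 2) ^ (j + k) * B) := by
        gcongr
        exact hKle hh hB ⟨by positivity, by linarith [hs.2, ht.2]⟩ (by linarith) x
    _ = K * 2 ^ (j + k) * (s ^ j * t ^ k / (s + t) ^ (j + k)) * B := by
        rw [div_pow]; field_simp
    _ ≤ K * 2 ^ (j + k) * (2 * (s * t / (s + t) ^ 2)) * B := by
        gcongr
        exact pow_mul_pow_div_add_pow_le hs0 ht hj hk
    _ = K * 2 ^ (j + k) * 2 * (s * t / (s + t) ^ 2) * B := by ring

-- The alternative `s = 1` serves `e^{-L}`, which is the case `j = 0`.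
lemma exists_abs_Q_polyOp_le {u : Polynomial ℝ} (hu : u.coeff 0 = 0) (j : ℕ) :
    ∃ K : ℝ, 0 ≤ K ∧ ∀ {h : M → ℝ} {B s t : ℝ}, BddMeasurable h → (∀ x, |h x| ≤ B) →
      s ∈ Ioc 0 1 → t ∈ Ioc 0 1 → (1 ≤ j ∨ s = 1) → ∀ x,
        |H.Q j s (H.polyOp u t h) x| ≤ K * (s * t / (s + t) ^ 2) * B := by
  choose! K hK0 hK using fun k (hk : k ∈ u.support) =>
    H.exists_abs_mul_semigroupDeriv_add_le j (one_le_of_mem_support_of_coeff_zero hu hk)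
  refine ⟨∑ k ∈ u.support, |u.coeff k| * K k,
    Finset.sum_nonneg fun k hk => mul_nonneg (abs_nonneg _) (hK0 k hk),
    fun {h B s t} hh hB hs ht hj x => ?_⟩
  rw [H.Q_polyOp hh u j hs.1 ht.1, Finset.sum_mul, Finset.sum_mul]
  refine (Finset.abs_sum_le_sum_abs _ _).trans (Finset.sum_le_sum fun k hk => ?_)
  rw [abs_mul]
  refine (mul_le_mul_of_nonneg_left (hK k hk hh hB hs ht hj x) (abs_nonneg _)).trans_eq ?_
  ring

end HeatKernelSetup

/-! ### Hölder norms -/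

lemma ofReal_abs_le_supNorm {M : Type*} (f : M → ℝ) (x : M) :
    ENNReal.ofReal |f x| ≤ supNorm f := by
  rw [← Real.norm_eq_abs, ofReal_norm, enorm_eq_nnnorm]
  exact le_iSup (fun x => (‖f x‖₊ : ℝ≥0∞)) x

namespace HeatKernelSetup

variable {M : Type*} [MeasurableSpace M] [MetricSpace M] (H : HeatKernelSetup M)
  {f : M → ℝ} {N e σ t : ℝ} {a k : ℕ}

/-- A bounded measurable `f` with `‖f‖_{C^σ,(a)} ≤ N`, where the suprema in the norm are written
out as pointwise real inequalities. -/
structure HolderBound (a : ℕ) (σ : ℝ) (f : M → ℝ) (N : ℝ) : Prop where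
  bddMeasurable : BddMeasurable f
  abs_S_one_le : ∀ x, |H.S 1 f x| ≤ N
  abs_Q_le : ∀ t ∈ Ioc (0 : ℝ) 1, ∀ x, |H.Q a t f x| ≤ t ^ (σ / 2) * N

lemma holderBound_toReal_CNorm (hf : Measurable f) (hsup : supNorm f < ⊤)
    (hN : H.CNorm a σ f < ⊤) : H.HolderBound a σ f (H.CNorm a σ f).toReal := by
  refine ⟨⟨hf, (supNorm f).toReal, fun x => ?_⟩, fun x => ?_, fun t ht x => ?_⟩
  · exact (ENNReal.ofReal_le_iff_le_toReal hsup.ne).1 (ofReal_abs_le_supNorm f x)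
  · exact (ENNReal.ofReal_le_iff_le_toReal hN.ne).1
      ((ofReal_abs_le_supNorm _ x).trans le_self_add)
  · have hpos : 0 < t ^ (σ / 2) := Real.rpow_pos_of_pos ht.1 _
    have hweight : ENNReal.ofReal (t ^ (-σ / 2) * |H.Q a t f x|) ≤ H.CNorm a σ f := by
      rw [ENNReal.ofReal_mul (Real.rpow_nonneg ht.1.le _)]
      exact (mul_le_mul_right (ofReal_abs_le_supNorm _ x) _).trans ((le_iSup₂
        (f := fun t _ => ENNReal.ofReal (t ^ (-σ / 2)) * supNorm (H.Q a t f)) t ht).trans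
          le_add_self)
    have hle := (ENNReal.ofReal_le_iff_le_toReal hN.ne).1 hweight
    rwa [neg_div, Real.rpow_neg ht.1.le, inv_mul_le_iff₀ hpos] at hle

namespace HolderBound

variable {H}

lemma abs_semigroupDeriv_le (h : H.HolderBound a σ f N) (ht : t ∈ Ioc 0 1) (x : M) :
    |H.semigroupDeriv a t f x| ≤ t ^ (σ / 2 - a) * N := by
  have hle := h.abs_Q_le t ht x
  rw [Q_eq, abs_mul, abs_pow, abs_neg, abs_of_pos ht.1] at hle
  rwa [Real.rpow_sub_natCast ht.1.ne', div_mul_eq_mul_div, le_div_iff₀' (pow_pos ht.1 a)]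

end HolderBound

lemma exists_abs_semigroupDeriv_le_rpow_of_le (hak : a ≤ k) (σ : ℝ) :
    ∃ C : ℝ, 0 ≤ C ∧ ∀ {f : M → ℝ} {N t : ℝ}, H.HolderBound a σ f N → t ∈ Ioc 0 1 → ∀ x,
      |H.semigroupDeriv k t f x| ≤ C * t ^ (σ / 2 - k) * N := by
  obtain ⟨m, rfl⟩ := Nat.exists_eq_add_of_le' hak
  obtain ⟨K, hK, hKle⟩ := H.exists_abs_semigroupDeriv_le m
  refine ⟨K * (1 / 2) ^ (σ / 2 - (m + a : ℕ)), by positivity, fun {f N t} h ht x => ?_⟩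
  have ht2 : t / 2 ∈ Ioc 0 1 := ⟨half_pos ht.1, by linarith [ht.1, ht.2]⟩
  calc |H.semigroupDeriv (m + a) t f x|
      = |H.semigroupDeriv m (t / 2) (H.semigroupDeriv a (t / 2) f) x| := by
        rw [H.semigroupDeriv_semigroupDeriv h.bddMeasurable m a ht2.1 ht2.1, add_halves]
    _ ≤ K / (t / 2) ^ m * ((t / 2) ^ (σ / 2 - a) * N) :=
        hKle (H.bddMeasurable_semigroupDeriv h.bddMeasurable a ht2.1)
          (h.abs_semigroupDeriv_le ht2) ht2 le_rfl x
    _ = K * (t / 2) ^ (σ / 2 - (m + a : ℕ)) * N := by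
        rw [Real.rpow_sub_natCast ht2.1.ne', Real.rpow_sub_natCast ht2.1.ne', pow_add]
        field_simp
    _ = K * (1 / 2) ^ (σ / 2 - (m + a : ℕ)) * t ^ (σ / 2 - (m + a : ℕ)) * N := by
        rw [← one_div_mul_eq_div, Real.mul_rpow (by norm_num) ht.1.le]
        ring

-- The mean value inequality on `[1, 2]`: at time `2` the derivative is controlled by `e^{-L} f`.
lemma exists_abs_semigroupDeriv_one_le (k : ℕ) :
    ∃ K : ℝ, 0 ≤ K ∧ ∀ {f : M → ℝ} {N A : ℝ}, BddMeasurable f → (∀ x, |H.S 1 f x| ≤ N) →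
      (∀ x, |H.semigroupDeriv (k + 1) 1 f x| ≤ A) → ∀ x,
        |H.semigroupDeriv k 1 f x| ≤ K * N + A := by
  obtain ⟨K, hK, hKle⟩ := H.exists_abs_semigroupDeriv_le k
  refine ⟨K, hK, fun {f N A} hf hN hA x => ?_⟩
  have htwo : |H.semigroupDeriv k 2 f x| ≤ K * N := by
    rw [← one_add_one_eq_two, H.semigroupDeriv_time_add hf k one_pos one_pos]
    simpa using hKle (H.bddMeasurable_S hf one_pos) hN ⟨one_pos, le_rfl⟩ le_rfl x
  have hderiv (r : ℝ) (hr : r ∈ Icc 1 2) : ‖H.semigroupDeriv (k + 1) r f x‖ ≤ A := by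
    rcases hr.1.eq_or_lt with rfl | hlt
    · exact hA x
    · rw [← sub_add_cancel r 1, ← H.S_semigroupDeriv hf (k + 1) (sub_pos.2 hlt) one_pos]
      exact H.abs_S_le (sub_pos.2 hlt) hA x
  have hmean := (convex_Icc (1 : ℝ) 2).norm_image_sub_le_of_norm_hasDerivWithin_le
    (fun r hr => (H.hasDerivAt_semigroupDeriv hf k (one_pos.trans_le hr.1) x).hasDerivWithinAt)
    hderiv (right_mem_Icc.2 one_le_two) (left_mem_Icc.2 one_le_two)
  norm_num at hmean
  linarith [abs_sub_abs_le_abs_sub (H.semigroupDeriv k 1 f x) (H.semigroupDeriv k 2 f x)]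

lemma exists_abs_semigroupDeriv_le_rpow_of_succ (k : ℕ) (he : e < 0) :
    ∃ K : ℝ, 0 ≤ K ∧ ∀ {f : M → ℝ} {N A t : ℝ}, BddMeasurable f → (∀ x, |H.S 1 f x| ≤ N) →
      (∀ r ∈ Ioc 0 1, ∀ x, |H.semigroupDeriv (k + 1) r f x| ≤ A * r ^ (e - 1)) →
      t ∈ Ioc 0 1 → ∀ x, |H.semigroupDeriv k t f x| ≤ K * (N + A) * t ^ e := by
  obtain ⟨K, hK, hKle⟩ := H.exists_abs_semigroupDeriv_one_le k
  have he' : 0 < -e := neg_pos.2 he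
  refine ⟨K + 1 + 1 / (-e), by positivity, fun {f N A t} hf hN hA ht x => ?_⟩
  have hN0 : 0 ≤ N := (abs_nonneg _).trans (hN x)
  have hA0 : 0 ≤ A := (abs_nonneg _).trans (by simpa using hA 1 ⟨one_pos, le_rfl⟩ x)
  have hone : |H.semigroupDeriv k 1 f x| ≤ K * N + A :=
    hKle hf hN (fun y => by simpa using hA 1 ⟨one_pos, le_rfl⟩ y) x
  have hpow : 1 ≤ t ^ e := Real.one_le_rpow_of_pos_of_le_one_of_nonpos ht.1 ht.2 he.le
  calc |H.semigroupDeriv k t f x| ≤ |H.semigroupDeriv k 1 f x| + A / (-e) * t ^ e :=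
        abs_le_of_abs_deriv_le_rpow he ht
          (fun r hr => H.hasDerivAt_semigroupDeriv hf k (ht.1.trans_le hr.1) x)
          fun r hr => hA r ⟨ht.1.trans_le hr.1, hr.2⟩ x
    _ ≤ (K * N + A) * t ^ e + A / (-e) * t ^ e := by
        gcongr
        exact hone.trans (le_mul_of_one_le_right (by positivity) hpow)
    _ = (K * N + A + 1 / (-e) * A) * t ^ e := by ring
    _ ≤ (K + 1 + 1 / (-e)) * (N + A) * t ^ e := by
        gcongr
        have : 0 ≤ K * A + N + 1 / (-e) * N := by positivity
        linarith

lemma exists_abs_semigroupDeriv_le_rpow (a : ℕ) (hk : σ / 2 < k) :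
    ∃ C : ℝ, 0 ≤ C ∧ ∀ {f : M → ℝ} {N t : ℝ}, H.HolderBound a σ f N → t ∈ Ioc 0 1 → ∀ x,
      |H.semigroupDeriv k t f x| ≤ C * t ^ (σ / 2 - k) * N := by
  rcases le_total a k with hak | hka
  · exact H.exists_abs_semigroupDeriv_le_rpow_of_le hak σ
  revert hk
  induction hka using Nat.decreasingInduction with
  | self => exact fun _ => H.exists_abs_semigroupDeriv_le_rpow_of_le le_rfl σ
  | of_succ k _ ih =>
    intro hk
    obtain ⟨C, hC, hCle⟩ := ih (hk.trans (by exact_mod_cast k.lt_succ_self))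
    obtain ⟨K, hK, hKle⟩ := H.exists_abs_semigroupDeriv_le_rpow_of_succ k (sub_neg.2 hk)
    refine ⟨K * (1 + C), by positivity, fun {f N t} h ht x => ?_⟩
    refine (hKle h.bddMeasurable h.abs_S_one_le (A := C * N) (fun r hr y => ?_) ht x).trans_eq
      (by ring)
    refine (hCle h hr y).trans_eq ?_
    rw [Nat.cast_succ, ← sub_sub]
    ring

lemma exists_abs_polyOp_le_rpow (a : ℕ) {u : Polynomial ℝ} (hu : ∀ k ∈ u.support, σ / 2 < k) :
    ∃ C : ℝ, 0 ≤ C ∧ ∀ {f : M → ℝ} {N t : ℝ}, H.HolderBound a σ f N → t ∈ Ioc 0 1 → ∀ x,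
      |H.polyOp u t f x| ≤ C * t ^ (σ / 2) * N := by
  choose! C hC0 hC using fun k (hk : k ∈ u.support) =>
    H.exists_abs_semigroupDeriv_le_rpow a (hu k hk)
  refine ⟨∑ k ∈ u.support, |u.coeff k| * C k,
    Finset.sum_nonneg fun k hk => mul_nonneg (abs_nonneg _) (hC0 k hk), fun {f N t} h ht x => ?_⟩
  rw [polyOp, Finset.sum_mul, Finset.sum_mul]
  refine (Finset.abs_sum_le_sum_abs _ _).trans (Finset.sum_le_sum fun k hk => ?_)
  have htk : 0 < t ^ k := pow_pos ht.1 k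
  calc |u.coeff k * ((-t) ^ k * H.semigroupDeriv k t f x)|
      = |u.coeff k| * (t ^ k * |H.semigroupDeriv k t f x|) := by
        rw [abs_mul, abs_mul, abs_pow, abs_neg, abs_of_pos ht.1]
    _ ≤ |u.coeff k| * (t ^ k * (C k * t ^ (σ / 2 - k) * N)) := by
        gcongr
        exact hC k hk h ht x
    _ = |u.coeff k| * C k * t ^ (σ / 2) * N := by
        rw [Real.rpow_sub_natCast ht.1.ne']
        field_simp

end HeatKernelSetup

/-! ### The paraproduct -/

section TimeIntegral

lemma integrableOn_rpow_div_one_add_sq {ρ : ℝ} (hρ : ρ ∈ Ioo (-1) 1) :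
    IntegrableOn (fun τ : ℝ => τ ^ ρ / (1 + τ) ^ 2) (Ioi 0) := by
  have hmeas : Measurable fun τ : ℝ => τ ^ ρ / (1 + τ) ^ 2 := by fun_prop
  rw [← Ioc_union_Ioi_eq_Ioi zero_le_one]
  refine IntegrableOn.union ?_ ?_
  · refine (intervalIntegral.intervalIntegrable_rpow' (b := 1) hρ.1).1.mono'
      hmeas.aestronglyMeasurable ?_
    filter_upwards [ae_restrict_mem measurableSet_Ioc] with τ ⟨hτ, _⟩
    rw [Real.norm_of_nonneg (by positivity)]
    exact div_le_self (by positivity) (one_le_pow₀ (by linarith))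
  · refine (integrableOn_Ioi_rpow_of_lt (a := ρ - 2) (by linarith [hρ.2]) one_pos).mono'
      hmeas.aestronglyMeasurable ?_
    filter_upwards [ae_restrict_mem measurableSet_Ioi] with τ hτ
    have hτ0 : 0 < τ := one_pos.trans hτ
    have hpow : τ ^ (ρ - 2) = τ ^ ρ / τ ^ 2 := by
      exact_mod_cast Real.rpow_sub_natCast hτ0.ne' ρ 2
    rw [Real.norm_of_nonneg (by positivity), hpow]
    gcongr
    linarith

lemma mul_rpow_div_add_sq_comp_mul {s τ : ℝ} (hs : 0 < s) (hτ : 0 ≤ τ) (ρ : ℝ) :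
    s * (s * τ) ^ ρ / (s + s * τ) ^ 2 = s ^ ρ * s⁻¹ * (τ ^ ρ / (1 + τ) ^ 2) := by
  rw [Real.mul_rpow hs.le hτ, ← mul_one_add]
  field_simp

lemma integrableOn_mul_rpow_div_add_sq {ρ s : ℝ} (hρ : ρ ∈ Ioo (-1) 1) (hs : 0 < s) :
    IntegrableOn (fun t : ℝ => s * t ^ ρ / (s + t) ^ 2) (Ioi 0) := by
  rw [← mul_zero s, ← integrableOn_Ioi_comp_mul_left_iff _ _ hs]
  exact IntegrableOn.congr_fun ((integrableOn_rpow_div_one_add_sq hρ).const_mul (s ^ ρ * s⁻¹))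
    (fun τ hτ => (mul_rpow_div_add_sq_comp_mul hs (le_of_lt hτ) ρ).symm) measurableSet_Ioi

lemma integral_mul_rpow_div_add_sq {s : ℝ} (hs : 0 < s) (ρ : ℝ) :
    ∫ t in Ioi (0 : ℝ), s * t ^ ρ / (s + t) ^ 2 =
      s ^ ρ * ∫ τ in Ioi (0 : ℝ), τ ^ ρ / (1 + τ) ^ 2 := by
  have hscale := integral_comp_mul_left_Ioi' (fun t => s * t ^ ρ / (s + t) ^ 2) 0 hs
  rw [mul_zero] at hscale
  rw [← hscale, setIntegral_congr_fun measurableSet_Ioi fun τ hτ =>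
    mul_rpow_div_add_sq_comp_mul hs (le_of_lt hτ) ρ, integral_const_mul, smul_eq_mul]
  field_simp

lemma integrableOn_and_abs_integral_le_of_abs_le {φ : ℝ → ℝ} {N ρ s : ℝ}
    (hρ : ρ ∈ Ioo (-1) 1) (hs : 0 < s)
    (hφ : AEStronglyMeasurable φ (volume.restrict (Ioc 0 1)))
    (hle : ∀ t ∈ Ioc 0 1, |φ t| ≤ N * (s * t ^ ρ / (s + t) ^ 2)) :
    IntegrableOn φ (Ioc 0 1) ∧
      |∫ t in Ioc 0 1, φ t| ≤ N * (s ^ ρ * ∫ τ in Ioi (0 : ℝ), τ ^ ρ / (1 + τ) ^ 2) := by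
  have hN : 0 ≤ N := by
    have hone := (abs_nonneg _).trans (hle 1 (right_mem_Ioc.2 one_pos))
    exact nonneg_of_mul_nonneg_left hone (by positivity)
  have hint : IntegrableOn (fun t => N * (s * t ^ ρ / (s + t) ^ 2)) (Ioi 0) :=
    (integrableOn_mul_rpow_div_add_sq hρ hs).const_mul N
  have hbound : ∀ᵐ t ∂volume.restrict (Ioc 0 1), ‖φ t‖ ≤ N * (s * t ^ ρ / (s + t) ^ 2) :=
    (ae_restrict_mem measurableSet_Ioc).mono hle
  have hintIoc : IntegrableOn (fun t => N * (s * t ^ ρ / (s + t) ^ 2)) (Ioc 0 1) :=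
    hint.mono_set Ioc_subset_Ioi_self
  refine ⟨hintIoc.mono' hφ hbound, (norm_integral_le_of_norm_le hintIoc hbound).trans ?_⟩
  rw [← integral_mul_rpow_div_add_sq hs, ← integral_const_mul]
  refine setIntegral_mono_set hint ?_ (.of_forall Ioc_subset_Ioi_self)
  filter_upwards [ae_restrict_mem measurableSet_Ioi] with t ht
  have ht0 : 0 < t := ht
  simp only [Pi.zero_apply]
  positivity

end TimeIntegral

namespace HeatKernelSetup

variable {M : Type*} [MeasurableSpace M] [MetricSpace M] (H : HeatKernelSetup M)
  {f g : M → ℝ} {α β s : ℝ} {b : ℕ}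

lemma Q_zero (t : ℝ) (f : M → ℝ) : H.Q 0 t f = H.S t f := by
  ext x
  simp [Q]

lemma paraS_eq_paraQ (b : ℕ) (g f : M → ℝ) : H.paraS b g f = H.paraQ b 0 g f 1 := by
  ext x
  simp only [paraS, paraQ, Q_zero]

lemma bddMeasurableFamily_paraInner {ι : Type*} [MeasurableSpace ι] (hf : BddMeasurable f)
    (hg : BddMeasurable g) {τ : ι → ℝ} (hτ : Measurable τ) (hpos : ∀ i, 0 < τ i) (b : ℕ) :
    BddMeasurableFamily fun i => H.paraInner b g f (τ i) := by
  have hpoly {h : ι → M → ℝ} (hh : BddMeasurableFamily h) (u : Polynomial ℝ) :=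
    H.bddMeasurableFamily_polyOp hh hτ hpos u
  convert (hpoly ((hpoly (.const hf) _).mul (hpoly (.const hg) _)) _).add
    (hpoly ((hpoly (.const hf) _).mul (hpoly (.const hg) _)) _) using 3 with i y
  exact H.paraInner_eq_polyOp b g f (τ i) y

lemma aestronglyMeasurable_Q_paraInner_div (hf : BddMeasurable f) (hg : BddMeasurable g)
    (b j : ℕ) (hs : 0 < s) (x : M) :
    AEStronglyMeasurable (fun t => H.Q j s (H.paraInner b g f t) x / t)
      (volume.restrict (Ioc 0 1)) := by
  have hfamily := H.bddMeasurableFamily_polyOp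
    (H.bddMeasurableFamily_paraInner hf hg measurable_subtype_coe
      (fun t : Ioc (0 : ℝ) 1 => t.2.1) b) measurable_const (fun _ => hs) (.X ^ j)
  refine ((aemeasurable_restrict_iff_comap_subtype measurableSet_Ioc).2
    (Measurable.aemeasurable ?_)).aestronglyMeasurable
  simp only [Q_eq_polyOp]
  exact (hfamily.measurable.comp measurable_prodMk_right).div measurable_subtype_coe

lemma exists_abs_Q_polyOp_mul_le (a₁ a₂ : ℕ) {u v w : Polynomial ℝ} (hu : u.coeff 0 = 0)
    (hv : ∀ k ∈ v.support, α / 2 < k) (hw : ∀ k ∈ w.support, β / 2 < k) (j : ℕ) :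
    ∃ K : ℝ, 0 ≤ K ∧ ∀ {f g : M → ℝ} {F G s t : ℝ}, H.HolderBound a₁ α f F →
      H.HolderBound a₂ β g G → s ∈ Ioc 0 1 → t ∈ Ioc 0 1 → (1 ≤ j ∨ s = 1) → ∀ x,
        |H.Q j s (H.polyOp u t fun z => H.polyOp v t f z * H.polyOp w t g z) x|
          ≤ K * (s * t / (s + t) ^ 2) * (t ^ ((α + β) / 2) * (F * G)) := by
  obtain ⟨K, hK, hKle⟩ := H.exists_abs_Q_polyOp_le hu j
  obtain ⟨A, hA, hAle⟩ := H.exists_abs_polyOp_le_rpow a₁ hv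
  obtain ⟨B, hB, hBle⟩ := H.exists_abs_polyOp_le_rpow a₂ hw
  refine ⟨K * (A * B), by positivity, fun {f g F G s t} hf hg hs ht hj x => ?_⟩
  have hprod (z : M) : |H.polyOp v t f z * H.polyOp w t g z|
      ≤ A * B * (t ^ ((α + β) / 2) * (F * G)) := by
    rw [abs_mul, add_div, Real.rpow_add ht.1]
    refine (mul_le_mul (hAle hf ht z) (hBle hg ht z) (abs_nonneg _)
      ((abs_nonneg _).trans (hAle hf ht z))).trans_eq ?_
    ring
  have hmeas : BddMeasurable fun z => H.polyOp v t f z * H.polyOp w t g z :=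
    ((BddMeasurableFamily.const (ι := Unit) (H.bddMeasurable_polyOp hf.bddMeasurable v ht.1)).mul
      (.const (H.bddMeasurable_polyOp hg.bddMeasurable w ht.1))).apply ()
  exact (hKle hmeas hprod hs ht hj x).trans_eq (by ring)

lemma exists_abs_Q_paraInner_le (a₁ a₂ : ℕ) (hb : 2 ≤ b) (hα : α < 2) (hβ : β < 0) (j : ℕ) :
    ∃ K : ℝ, 0 ≤ K ∧ ∀ {f g : M → ℝ} {F G s t : ℝ}, H.HolderBound a₁ α f F →
      H.HolderBound a₂ β g G → s ∈ Ioc 0 1 → t ∈ Ioc 0 1 → (1 ≤ j ∨ s = 1) → ∀ x,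
        |H.Q j s (H.paraInner b g f t) x|
          ≤ K * (s * t / (s + t) ^ 2) * (t ^ ((α + β) / 2) * (F * G)) := by
  have hQ : (.X ^ (b - 1) : Polynomial ℝ).coeff 0 = 0 := by
    rw [Polynomial.coeff_X_pow, if_neg (by omega)]
  have hLP : (.X * expTaylor b).coeff 0 = 0 := Polynomial.coeff_X_mul_zero _
  have hv {v : Polynomial ℝ} (hv0 : v.coeff 0 = 0) (k : ℕ) (hk : k ∈ v.support) :
      α / 2 < k := by
    have : (1 : ℝ) ≤ k := by exact_mod_cast one_le_of_mem_support_of_coeff_zero hv0 hk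
    linarith
  have hw (k : ℕ) (_ : k ∈ (expTaylor b).support) : β / 2 < k :=
    (div_neg_of_neg_of_pos hβ two_pos).trans_le k.cast_nonneg
  obtain ⟨K₁, hK₁, hle₁⟩ := H.exists_abs_Q_polyOp_mul_le a₁ a₂ hLP (hv hQ) hw j
  obtain ⟨K₂, hK₂, hle₂⟩ := H.exists_abs_Q_polyOp_mul_le a₁ a₂ hQ (hv hLP) hw j
  refine ⟨K₁ + K₂, by positivity, fun {f g F G s t} hf hg hs ht hj x => ?_⟩
  have hmeas (u v : Polynomial ℝ) : BddMeasurable (H.polyOp u t fun z =>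
      H.polyOp v t f z * H.polyOp (expTaylor b) t g z) :=
    H.bddMeasurable_polyOp ((BddMeasurableFamily.mul (ι := Unit)
      (.const (H.bddMeasurable_polyOp hf.bddMeasurable v ht.1))
      (.const (H.bddMeasurable_polyOp hg.bddMeasurable _ ht.1))).apply ()) u ht.1
  rw [funext (H.paraInner_eq_polyOp b g f t), H.Q_fun_add (hmeas _ _) (hmeas _ _) j hs.1,
    add_mul, add_mul]
  exact (abs_add_le _ _).trans (add_le_add (hle₁ hf hg hs ht hj x) (hle₂ hf hg hs ht hj x))

lemma exists_abs_paraQ_le (a₁ a₂ : ℕ) (hb : 2 ≤ b) (hα : α < 2) (hβ : β < 0) (hαβ : -2 < α + β)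
    (j : ℕ) : ∃ K : ℝ, 0 ≤ K ∧ ∀ {f g : M → ℝ} {F G s : ℝ}, H.HolderBound a₁ α f F →
      H.HolderBound a₂ β g G → s ∈ Ioc 0 1 → (1 ≤ j ∨ s = 1) → ∀ x,
        IntegrableOn (fun t => H.Q j s (H.paraInner b g f t) x / t) (Ioc 0 1) ∧
          |H.paraQ b j g f s x| ≤ K * (F * G) * s ^ ((α + β) / 2) := by
  obtain ⟨K, hK, hKle⟩ := H.exists_abs_Q_paraInner_le a₁ a₂ hb hα hβ j
  refine ⟨|(gammaInt b)⁻¹| * K * ∫ τ in Ioi (0 : ℝ), τ ^ ((α + β) / 2) / (1 + τ) ^ 2,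
    mul_nonneg (by positivity) (setIntegral_nonneg measurableSet_Ioi fun τ hτ => ?_),
    fun {f g F G s} hf hg hs hj x => ?_⟩
  · have : 0 < τ := hτ
    positivity
  have hle (t : ℝ) (ht : t ∈ Ioc 0 1) : |H.Q j s (H.paraInner b g f t) x / t|
      ≤ K * (F * G) * (s * t ^ ((α + β) / 2) / (s + t) ^ 2) := by
    rw [abs_div, abs_of_pos ht.1, div_le_iff₀ ht.1]
    exact (hKle hf hg hs ht hj x).trans_eq (by ring)
  obtain ⟨hint, hbound⟩ := integrableOn_and_abs_integral_le_of_abs_le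
    ⟨by linarith, by linarith⟩ hs.1
    (H.aestronglyMeasurable_Q_paraInner_div hf.bddMeasurable hg.bddMeasurable b j hs.1 x) hle
  refine ⟨hint, ?_⟩
  rw [paraQ, abs_mul]
  exact (mul_le_mul_of_nonneg_left hbound (abs_nonneg _)).trans_eq (by ring)

end HeatKernelSetup

lemma supNorm_add_iSup_le {M : Type*} {u : M → ℝ} {v : ℝ → M → ℝ} {A B σ : ℝ} (hA : 0 ≤ A)
    (hB : 0 ≤ B) (hu : ∀ x, |u x| ≤ A) (hv : ∀ s ∈ Ioc 0 1, ∀ x, |v s x| ≤ B * s ^ (σ / 2)) :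
    supNorm u + (⨆ s ∈ Ioc (0 : ℝ) 1, ENNReal.ofReal (s ^ (-σ / 2)) * supNorm (v s))
      ≤ ENNReal.ofReal (A + B) := by
  rw [ENNReal.ofReal_add hA hB]
  refine add_le_add (supNorm_le_ofReal hu) (iSup₂_le fun s hs => ?_)
  have hpos : 0 < s ^ (σ / 2) := Real.rpow_pos_of_pos hs.1 _
  calc ENNReal.ofReal (s ^ (-σ / 2)) * supNorm (v s)
      ≤ ENNReal.ofReal (s ^ (-σ / 2)) * ENNReal.ofReal (B * s ^ (σ / 2)) := by
        gcongr
        exact supNorm_le_ofReal (hv s hs)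
    _ = ENNReal.ofReal B := by
        rw [← ENNReal.ofReal_mul (Real.rpow_nonneg hs.1.le _), neg_div, Real.rpow_neg hs.1.le,
          mul_comm B, inv_mul_cancel_left₀ hpos.ne']

theorem paraproduct_estimate_negative_regularity_general
    {M : Type*} [MeasurableSpace M] [MetricSpace M] (H : HeatKernelSetup M)
    (a₁ a₂ b c : ℕ) (hb : 2 ≤ b) (hc : 1 ≤ c) (α β : ℝ) (hα : α < 2) (hβ : β < 0)
    (hαβ : -2 < α + β) :
    ∃ C, 0 < C ∧ ∀ f g : M → ℝ,
      Measurable f → supNorm f < ⊤ → H.CNorm a₁ α f < ⊤ →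
      Measurable g → supNorm g < ⊤ → H.CNorm a₂ β g < ⊤ →
      (∀ s ∈ Set.Ioc (0 : ℝ) 1, ∀ x : M,
        IntegrableOn (fun t => H.Q c s (H.paraInner b g f t) x / t) (Set.Ioc 0 1)) ∧
      (∀ x : M,
        IntegrableOn (fun t => H.S 1 (H.paraInner b g f t) x / t) (Set.Ioc 0 1)) ∧
      supNorm (H.paraS b g f) +
          (⨆ s ∈ Set.Ioc (0 : ℝ) 1,
            ENNReal.ofReal (s ^ (-(α + β) / 2)) * supNorm (H.paraQ b c g f s))
        ≤ ENNReal.ofReal C * H.CNorm a₂ β g * H.CNorm a₁ α f := by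
  obtain ⟨K₀, hK₀, hS⟩ := H.exists_abs_paraQ_le a₁ a₂ hb hα hβ hαβ 0
  obtain ⟨K, hK, hQ⟩ := H.exists_abs_paraQ_le a₁ a₂ hb hα hβ hαβ c
  refine ⟨K₀ + K + 1, by positivity, fun f g hf hfsup hfN hg hgsup hgN => ?_⟩
  set F := (H.CNorm a₁ α f).toReal
  set G := (H.CNorm a₂ β g).toReal
  have hF : H.HolderBound a₁ α f F := H.holderBound_toReal_CNorm hf hfsup hfN
  have hG : H.HolderBound a₂ β g G := H.holderBound_toReal_CNorm hg hgsup hgN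
  replace hS (x : M) := hS hF hG (right_mem_Ioc.2 one_pos) (Or.inr rfl) x
  replace hQ (s : ℝ) (hs : s ∈ Ioc 0 1) (x : M) := hQ hF hG hs (Or.inl hc) x
  simp only [HeatKernelSetup.Q_zero, ← HeatKernelSetup.paraS_eq_paraQ, Real.one_rpow, mul_one] at hS
  refine ⟨fun s hs x => (hQ s hs x).1, fun x => (hS x).1, ?_⟩
  calc _ ≤ ENNReal.ofReal (K₀ * (F * G) + K * (F * G)) :=
        supNorm_add_iSup_le (by positivity) (by positivity) (fun x => (hS x).2)
          fun s hs x => (hQ s hs x).2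
    _ ≤ ENNReal.ofReal ((K₀ + K + 1) * (F * G)) := by
        rw [← add_mul]
        exact ENNReal.ofReal_le_ofReal
          (mul_le_mul_of_nonneg_right (le_add_of_nonneg_right zero_le_one) (by positivity))
    _ = ENNReal.ofReal (K₀ + K + 1) * H.CNorm a₂ β g * H.CNorm a₁ α f := by
        rw [ENNReal.ofReal_mul (by positivity), ENNReal.ofReal_mul (by positivity),
          ENNReal.ofReal_toReal hfN.ne, ENNReal.ofReal_toReal hgN.ne, mul_assoc,
          mul_comm (H.CNorm a₂ β g)]

/-- **Proposition 3.2, second estimate.** For `b ≥ 2`, `α ∈ (-2,1)`, `β < 0` with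
`α + β ∈ (-2,1)`, the paraproduct satisfies `‖Π_g^{(b)}(f)‖_{C^{α+β}} ≤ C ‖g‖_{C^β} ‖f‖_{C^α}`,
its frequency pieces being given by absolutely convergent `dt/t`-integrals. -/
theorem paraproduct_estimate_negative_regularity
    {M : Type*} [MeasurableSpace M] [MetricSpace M] (H : HeatKernelSetup M)
    (b : ℕ) (hb : 2 ≤ b) (α β : ℝ) (hα : α ∈ Set.Ioo (-2 : ℝ) 1) (hβ : β < 0)
    (hαβ : α + β ∈ Set.Ioo (-2 : ℝ) 1) :
    ∃ C, 0 < C ∧ ∀ f g : M → ℝ,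
      Measurable f → supNorm f < ⊤ → H.CNorm (b - 1) α f < ⊤ →
      Measurable g → supNorm g < ⊤ → H.CNorm (b - 1) β g < ⊤ →
      (∀ s ∈ Set.Ioc (0 : ℝ) 1, ∀ x : M,
        IntegrableOn (fun t => H.Q (b - 1) s (H.paraInner b g f t) x / t) (Set.Ioc 0 1)) ∧
      (∀ x : M,
        IntegrableOn (fun t => H.S 1 (H.paraInner b g f t) x / t) (Set.Ioc 0 1)) ∧
      supNorm (H.paraS b g f) +
          (⨆ s ∈ Set.Ioc (0 : ℝ) 1,
            ENNReal.ofReal (s ^ (-(α + β) / 2)) * supNorm (H.paraQ b (b - 1) g f s))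
        ≤ ENNReal.ofReal C * H.CNorm (b - 1) β g * H.CNorm (b - 1) α f :=
  paraproduct_estimate_negative_regularity_general H (b - 1) (b - 1) b (b - 1) hb (by omega) α β
    (by linarith [hα.2]) hβ hαβ.1
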